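/- arXiv:1001.2451 — 5 statements merged into one kernel-verified Lean document; each statement's English description precedes it below -/
import Mathlib

section
/- Let n = 2(ñ+γ) with ñ ∈ ℕ and γ ∈ {0, 1/2}, let 0 ≤ φ₁ < φ₂ < ⋯ < φ_n < 2π, and let T(φ) = ∏_{s=1}^n sin((φ−φ_s)/2) be the trigonometric nodes polynomial, which belongs to 𝒯_{ñ,γ}. For every l ∈ ℕ₀ the following are equivalent: (i) there exist real weights μ₁,…,μ_n such that (1/2π)∫₀^{2π} t(φ) dσ(φ) = Σ_{s=1}^n μ_s t(φ_s) for every t ∈ 𝒯_{ñ+2γ+l}; (ii) ∫₀^{2π} t(φ) T(φ) dσ(φ) = 0 for every t ∈ 𝒯_{l,γ}. -/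
/-!
Put `w = exp(iφ/2)`. A trigonometric polynomial `t ∈ 𝒯_{l,γ}` with `2γ = d` is the same as a
real function for which `t(φ) w^(2l+d)` is a complex polynomial of degree at most `2l+d` in
`w² = exp(iφ)` (`TrigPoly.exists_poly`, `trigPoly_re`), and the nodes polynomial satisfies
`c T(φ) w^n = ∏ₛ (w² - exp(iφₛ))` for a nonzero constant `c` (`nodes_eq`). Comparing degrees, `tT`
lies in `𝒯_{ñ+2γ+l}` for `t ∈ 𝒯_{l,γ}` (`TrigPoly.mul_nodes`), and since the points `exp(iφₛ)`
are distinct, each element of `𝒯_{ñ+2γ+l}` vanishing at all nodes is `tT` for such a `t`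
(`TrigPoly.exists_factor`).

Hence (ii) says that the functional `t ↦ (1/2π) ∫ t dσ` on `𝒯_{ñ+2γ+l}` vanishes on the common
kernel of the evaluations at the nodes. By linear algebra this holds iff the functional is a linear
combination of these evaluations, which is (i).
-/

open MeasureTheory Real

/-- `TrigPoly l γ f` : `f` belongs to the real span of
`cos((k+γ)φ)`, `sin((k+γ)φ)` for `0 ≤ k ≤ l`. -/
def TrigPoly (l : ℕ) (γ : ℝ) (f : ℝ → ℝ) : Prop :=
  ∃ a b : ℕ → ℝ, ∀ φ : ℝ,
    f φ = ∑ k ∈ Finset.range (l + 1),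
      (a k * Real.cos ((k + γ) * φ) + b k * Real.sin ((k + γ) * φ))

/-- The half-angle point `exp(iφ/2)` of the unit circle. -/
noncomputable def halfExp (φ : ℝ) : ℂ := Complex.exp (φ / 2 * Complex.I)

lemma halfExp_ne_zero (φ : ℝ) : halfExp φ ≠ 0 := Complex.exp_ne_zero _

lemma halfExp_pow (φ : ℝ) (k : ℕ) : halfExp φ ^ k = Complex.exp (k * (φ / 2 * Complex.I)) := by
  rw [halfExp, ← Complex.exp_nat_mul]

/-! ### Closure properties of trigonometric polynomials -/

lemma TrigPoly.zero (l : ℕ) (γ : ℝ) : TrigPoly l γ 0 := ⟨0, 0, by simp⟩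

lemma TrigPoly.add {l : ℕ} {γ : ℝ} {f g : ℝ → ℝ} (hf : TrigPoly l γ f) (hg : TrigPoly l γ g) :
    TrigPoly l γ (f + g) := by
  obtain ⟨a, b, h⟩ := hf
  obtain ⟨a', b', h'⟩ := hg
  refine ⟨a + a', b + b', fun φ => ?_⟩
  rw [Pi.add_apply, h, h', ← Finset.sum_add_distrib]
  refine Finset.sum_congr rfl fun k _ => ?_
  simp only [Pi.add_apply]
  ring

lemma TrigPoly.smul {l : ℕ} {γ : ℝ} {f : ℝ → ℝ} (c : ℝ) (hf : TrigPoly l γ f) :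
    TrigPoly l γ (c • f) := by
  obtain ⟨a, b, h⟩ := hf
  refine ⟨c • a, c • b, fun φ => ?_⟩
  rw [Pi.smul_apply, h, smul_eq_mul, Finset.mul_sum]
  refine Finset.sum_congr rfl fun k _ => ?_
  simp only [Pi.smul_apply, smul_eq_mul]
  ring

/-- The space `𝒯_{l,γ}` as a submodule of all real functions. -/
def trigSpace (l : ℕ) (γ : ℝ) : Submodule ℝ (ℝ → ℝ) where
  carrier := {f | TrigPoly l γ f}
  add_mem' hf hg := hf.add hg
  zero_mem' := TrigPoly.zero l γ
  smul_mem' c _ hf := hf.smul c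

lemma trigPoly_single {l k : ℕ} (hk : k ≤ l) (γ a b : ℝ) :
    TrigPoly l γ (fun φ => a * Real.cos ((k + γ) * φ) + b * Real.sin ((k + γ) * φ)) := by
  refine ⟨fun j => if j = k then a else 0, fun j => if j = k then b else 0, fun φ => ?_⟩
  rw [Finset.sum_eq_single k]
  · simp
  · intro j _ hj
    simp [hj]
  · intro h
    exact absurd (Finset.mem_range.2 (by omega)) h

lemma TrigPoly.integrable {l : ℕ} {γ : ℝ} {f : ℝ → ℝ} (hf : TrigPoly l γ f) (σ : Measure ℝ)
    [IsFiniteMeasure σ] : Integrable f σ := by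
  obtain ⟨a, b, h⟩ := hf
  rw [funext h]
  refine integrable_finsetSum _ fun k _ => ?_
  refine Integrable.add (Integrable.const_mul ?_ _) (Integrable.const_mul ?_ _)
  · refine Integrable.of_bound (by fun_prop) 1 (Filter.Eventually.of_forall fun x => ?_)
    exact Real.abs_cos_le_one _
  · refine Integrable.of_bound (by fun_prop) 1 (Filter.Eventually.of_forall fun x => ?_)
    exact Real.abs_sin_le_one _

/-! ### Trigonometric polynomials as algebraic polynomials on the circle -/

/-- `a cos((k+d/2)φ) + b sin((k+d/2)φ)`, multiplied by `w^(2l+d)`, is a combination of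
`w^(2(l+d+k))` and `w^(2(l-k))`. -/
lemma single_mul_pow {l k : ℕ} (hk : k ≤ l) (d : ℕ) (a b φ : ℝ) :
    ((a * Real.cos ((k + (d : ℝ) / 2) * φ) + b * Real.sin ((k + (d : ℝ) / 2) * φ) : ℝ) : ℂ)
        * halfExp φ ^ (2 * l + d)
      = ((a - b * Complex.I) / 2) * (halfExp φ ^ 2) ^ (l + d + k)
        + ((a + b * Complex.I) / 2) * (halfExp φ ^ 2) ^ (l - k) := by
  obtain ⟨r, rfl⟩ := Nat.exists_eq_add_of_le hk
  have hr : k + r - k = r := by omega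
  rw [hr, ← pow_mul, ← pow_mul]
  have e1 : halfExp φ ^ (2 * (k + r + d + k))
      = Complex.exp (((k + (d : ℝ) / 2) * φ : ℝ) * Complex.I)
        * halfExp φ ^ (2 * (k + r) + d) := by
    rw [halfExp_pow, halfExp_pow, ← Complex.exp_add]
    congr 1
    push_cast
    ring
  have e2 : halfExp φ ^ (2 * r)
      = Complex.exp (-((k + (d : ℝ) / 2) * φ : ℝ) * Complex.I)
        * halfExp φ ^ (2 * (k + r) + d) := by
    rw [halfExp_pow, halfExp_pow, ← Complex.exp_add]
    congr 1
    push_cast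
    ring
  rw [e1, e2, Complex.ofReal_add, Complex.ofReal_mul, Complex.ofReal_mul, Complex.ofReal_cos,
    Complex.ofReal_sin, Complex.cos, Complex.sin]
  ring

open Polynomial in
lemma TrigPoly.exists_poly {l d : ℕ} {f : ℝ → ℝ} (hf : TrigPoly l ((d : ℝ) / 2) f) :
    ∃ P : ℂ[X], P.natDegree ≤ 2 * l + d ∧
      ∀ φ, (f φ : ℂ) * halfExp φ ^ (2 * l + d) = P.eval (halfExp φ ^ 2) := by
  obtain ⟨a, b, h⟩ := hf
  refine ⟨∑ k ∈ Finset.range (l + 1), (C ((a k - b k * Complex.I) / 2) * X ^ (l + d + k)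
        + C ((a k + b k * Complex.I) / 2) * X ^ (l - k)), ?_, fun φ => ?_⟩
  · refine natDegree_sum_le_of_forall_le _ _ fun k hk => ?_
    have hk := Finset.mem_range.1 hk
    refine natDegree_add_le_of_degree_le ?_ ?_
    · exact (natDegree_C_mul_X_pow_le _ _).trans (by omega)
    · exact (natDegree_C_mul_X_pow_le _ _).trans (by omega)
  · rw [h, Complex.ofReal_sum, Finset.sum_mul, eval_finsetSum]
    refine Finset.sum_congr rfl fun k hk => ?_
    have hk := Finset.mem_range.1 hk
    rw [single_mul_pow (by omega)]
    simp

lemma re_mul_exp (q : ℂ) (x : ℝ) :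
    (q * Complex.exp (x * Complex.I)).re = q.re * Real.cos x - q.im * Real.sin x := by
  rw [Complex.mul_re, Complex.exp_ofReal_mul_I_re, Complex.exp_ofReal_mul_I_im]

/-- The frequencies `j - l - d/2` with `0 ≤ j ≤ 2l+d` are, up to sign, those of `𝒯_{l,d/2}`; for
this the condition `d ≤ 1` is essential. -/
lemma trigPoly_re_single {l d j : ℕ} (hd : d ≤ 1) (hj : j ≤ 2 * l + d) (q : ℂ) :
    TrigPoly l ((d : ℝ) / 2)
      (fun φ => (q * (halfExp φ ^ 2) ^ j / halfExp φ ^ (2 * l + d)).re) := by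
  by_cases h : l + d ≤ j
  · obtain ⟨k, rfl⟩ := Nat.exists_eq_add_of_le h
    convert trigPoly_single (show k ≤ l by omega) ((d : ℝ) / 2) q.re (-q.im) using 2 with φ
    rw [neg_mul, ← sub_eq_add_neg, ← re_mul_exp, ← pow_mul, halfExp_pow, halfExp_pow,
      mul_div_assoc, ← Complex.exp_sub]
    congr 3
    push_cast
    ring
  · obtain ⟨k, rfl⟩ := Nat.exists_eq_add_of_le (show j ≤ l by omega)
    convert trigPoly_single (show k ≤ j + k by omega) ((d : ℝ) / 2) q.re q.im using 2 with φ
    have := re_mul_exp q (-((k + (d : ℝ) / 2) * φ))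
    rw [Real.cos_neg, Real.sin_neg, mul_neg, sub_neg_eq_add] at this
    rw [← this, ← pow_mul, halfExp_pow, halfExp_pow, mul_div_assoc, ← Complex.exp_sub]
    congr 3
    push_cast
    ring

open Polynomial in
lemma trigPoly_re {l d : ℕ} (hd : d ≤ 1) {Q : ℂ[X]} (hQ : Q.natDegree ≤ 2 * l + d) :
    TrigPoly l ((d : ℝ) / 2)
      (fun φ => (Q.eval (halfExp φ ^ 2) / halfExp φ ^ (2 * l + d)).re) := by
  have key : (fun φ => (Q.eval (halfExp φ ^ 2) / halfExp φ ^ (2 * l + d)).re)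
      = ∑ j ∈ Finset.range (2 * l + d + 1),
        fun φ => (Q.coeff j * (halfExp φ ^ 2) ^ j / halfExp φ ^ (2 * l + d)).re := by
    funext φ
    rw [eval_eq_sum_range' (Nat.lt_succ_of_le hQ), Finset.sum_div, Complex.re_sum,
      Finset.sum_apply]
  rw [key]
  refine Submodule.sum_mem (trigSpace l ((d : ℝ) / 2)) fun j hj => ?_
  exact trigPoly_re_single hd (Nat.lt_succ_iff.1 (Finset.mem_range.1 hj)) _

/-! ### The nodes polynomial -/

lemma sin_half_eq (φ θ : ℝ) :
    (2 * Complex.I * halfExp θ) * (Real.sin ((φ - θ) / 2) : ℂ) * halfExp φ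
      = halfExp φ ^ 2 - halfExp θ ^ 2 := by
  have e1 : Complex.exp (((φ - θ) / 2 : ℝ) * Complex.I) * halfExp θ = halfExp φ := by
    rw [halfExp, halfExp, ← Complex.exp_add]
    congr 1
    push_cast
    ring
  have e2 : Complex.exp (-((φ - θ) / 2 : ℝ) * Complex.I) * halfExp φ = halfExp θ := by
    rw [halfExp, halfExp, ← Complex.exp_add]
    congr 1
    push_cast
    ring
  rw [Complex.ofReal_sin, Complex.sin]
  linear_combination halfExp φ * e1 - halfExp θ * e2
    + halfExp θ * halfExp φ * (Complex.exp (-((φ - θ) / 2 : ℝ) * Complex.I)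
      - Complex.exp (((φ - θ) / 2 : ℝ) * Complex.I)) * Complex.I_sq

/-- `c T(φ) w^n = ∏ₛ (w² - exp(iφₛ))` with `c = ∏ₛ 2i exp(iφₛ/2)`. -/
lemma nodes_eq {n : ℕ} (φs : Fin n → ℝ) (φ : ℝ) :
    (∏ s, 2 * Complex.I * halfExp (φs s))
        * ((∏ s, Real.sin ((φ - φs s) / 2) : ℝ) : ℂ) * halfExp φ ^ n
      = ∏ s, (halfExp φ ^ 2 - halfExp (φs s) ^ 2) := by
  have h : halfExp φ ^ n = ∏ _s : Fin n, halfExp φ := by simp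
  rw [h, Complex.ofReal_prod, ← Finset.prod_mul_distrib, ← Finset.prod_mul_distrib]
  exact Finset.prod_congr rfl fun s _ => sin_half_eq _ _

lemma halfExp_sq_injOn : Set.InjOn (fun φ => halfExp φ ^ 2) (Set.Ico 0 (2 * π)) := by
  intro x hx y hy h
  simp only [halfExp_pow] at h
  obtain ⟨k, hk⟩ := Complex.exp_eq_exp_iff_exists_int.1 h
  have hxy : x = y + k * (2 * π) := by
    have : (x : ℂ) * Complex.I = (y + k * (2 * π)) * Complex.I := by
      push_cast at hk
      linear_combination hk
    exact_mod_cast mul_right_cancel₀ Complex.I_ne_zero this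
  have hpi := Real.two_pi_pos
  have h1 : (k : ℝ) < 1 := by
    by_contra! hc
    nlinarith [hx.2, hy.1]
  have h2 : (-1 : ℝ) < k := by
    by_contra! hc
    nlinarith [hx.1, hy.2]
  have hk0 : k = 0 := by
    have h1 : k < 1 := by exact_mod_cast h1
    have h2 : -1 < k := by exact_mod_cast h2
    omega
  simpa [hk0] using hxy

open Polynomial in
lemma TrigPoly.mul_nodes {ntil d l n : ℕ} (hn : n = 2 * ntil + d)
    (φs : Fin n → ℝ) {t : ℝ → ℝ} (ht : TrigPoly l ((d : ℝ) / 2) t) :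
    TrigPoly (ntil + d + l) 0 (fun φ => t φ * ∏ s, Real.sin ((φ - φs s) / 2)) := by
  obtain ⟨P, hP, h⟩ := ht.exists_poly
  set c : ℂ := ∏ s, 2 * Complex.I * halfExp (φs s) with hc
  have hc0 : c ≠ 0 := Finset.prod_ne_zero_iff.2 fun s _ =>
    mul_ne_zero (by simp) (halfExp_ne_zero _)
  have hdeg : (C c⁻¹ * (P * ∏ s, (X - C (halfExp (φs s) ^ 2)))).natDegree
      ≤ 2 * (ntil + d + l) + 0 := by
    refine (natDegree_C_mul_le _ _).trans (natDegree_mul_le.trans ?_)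
    rw [natDegree_prod_of_monic _ _ fun s _ => monic_X_sub_C _]
    simp only [natDegree_X_sub_C, Finset.sum_const, Finset.card_univ, Fintype.card_fin,
      smul_eq_mul, mul_one]
    omega
  have := trigPoly_re zero_le_one hdeg
  rw [Nat.cast_zero, zero_div] at this
  convert this using 2 with φ
  rw [← Complex.ofReal_re (_ * _)]
  congr 1
  rw [eq_div_iff (pow_ne_zero _ (halfExp_ne_zero _)), eval_mul, eval_mul, eval_C, eval_prod]
  simp only [eval_sub, eval_X, eval_C]
  rw [← nodes_eq, ← h, ← hc, Complex.ofReal_mul]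
  have hp : halfExp φ ^ (2 * (ntil + d + l) + 0)
      = halfExp φ ^ (2 * l + d) * halfExp φ ^ n := by
    rw [← pow_add]
    congr 1
    omega
  rw [hp]
  field_simp

open Polynomial in
lemma TrigPoly.exists_factor {ntil d l n : ℕ} (hd : d ≤ 1) (hn : n = 2 * ntil + d)
    {φs : Fin n → ℝ} (hinj : Function.Injective φs) (hrange : ∀ s, φs s ∈ Set.Ico 0 (2 * π))
    {p : ℝ → ℝ} (hp : TrigPoly (ntil + d + l) 0 p) (h0 : ∀ s, p (φs s) = 0) :
    ∃ t, TrigPoly l ((d : ℝ) / 2) t ∧ ∀ φ, p φ = t φ * ∏ s, Real.sin ((φ - φs s) / 2) := by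
  have hp' : TrigPoly (ntil + d + l) (((0 : ℕ) : ℝ) / 2) p := by simpa using hp
  obtain ⟨P, hP, h⟩ := hp'.exists_poly
  have hz : Function.Injective fun s => halfExp (φs s) ^ 2 := fun s s' hs =>
    hinj (halfExp_sq_injOn (hrange s) (hrange s') hs)
  have hdvd : (∏ s, (X - C (halfExp (φs s) ^ 2))) ∣ P := by
    refine Finset.prod_dvd_of_coprime
      (fun s _ s' _ hs => pairwise_coprime_X_sub_C hz hs) fun s _ => ?_
    rw [dvd_iff_isRoot, IsRoot, ← h, h0]
    simp
  obtain ⟨Q, rfl⟩ := hdvd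
  have hQ : Q.natDegree ≤ 2 * l + d := by
    by_cases hQ0 : Q = 0
    · simp [hQ0]
    · rw [(monic_prod_of_monic _ _ fun s _ => monic_X_sub_C _).natDegree_mul' hQ0,
        natDegree_prod_of_monic _ _ fun s _ => monic_X_sub_C _] at hP
      simp only [natDegree_X_sub_C, Finset.sum_const, Finset.card_univ, Fintype.card_fin,
        smul_eq_mul, mul_one] at hP
      omega
  set c : ℂ := ∏ s, 2 * Complex.I * halfExp (φs s) with hc
  refine ⟨_, trigPoly_re hd ((natDegree_C_mul_le c Q).trans hQ), fun φ => ?_⟩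
  -- `p` and the nodes polynomial are real, so the quotient may be replaced by its real part.
  rw [← Complex.re_mul_ofReal, ← Complex.ofReal_re (p φ)]
  congr 1
  have hw := halfExp_ne_zero φ
  have h1 := h φ
  rw [eval_mul, eval_prod] at h1
  simp only [eval_sub, eval_X, eval_C] at h1
  have hpow : halfExp φ ^ (2 * (ntil + d + l) + 0)
      = halfExp φ ^ (2 * l + d) * halfExp φ ^ n := by
    rw [← pow_add]
    congr 1
    omega
  rw [← nodes_eq, ← hc, hpow] at h1
  rw [div_mul_eq_mul_div, eq_div_iff (pow_ne_zero _ hw)]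
  refine mul_right_cancel₀ (pow_ne_zero n hw) ?_
  rw [eval_mul, eval_C]
  linear_combination h1

theorem stmt0
    (σ : Measure ℝ) [IsFiniteMeasure σ]
    (hsupp : σ (Set.Icc 0 (2 * π))ᶜ = 0)
    (hnorm : (1 / (2 * π)) * ∫ _φ, (1 : ℝ) ∂σ = 1)
    (ntil d : ℕ) (hd : d = 0 ∨ d = 1)
    (n : ℕ) (hn : n = 2 * ntil + d)
    (φs : Fin n → ℝ) (hmono : StrictMono φs)
    (hrange : ∀ s, φs s ∈ Set.Ico 0 (2 * π))
    (T : ℝ → ℝ) (hT : ∀ φ, T φ = ∏ s, Real.sin ((φ - φs s) / 2))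
    (l : ℕ) :
    (∃ μ : Fin n → ℝ, ∀ t : ℝ → ℝ, TrigPoly (ntil + d + l) 0 t →
        (1 / (2 * π)) * ∫ φ, t φ ∂σ = ∑ s, μ s * t (φs s)) ↔
    (∀ t : ℝ → ℝ, TrigPoly l ((d : ℝ) / 2) t → ∫ φ, t φ * T φ ∂σ = 0) := by
  have hd1 : d ≤ 1 := by omega
  obtain rfl : T = fun φ => ∏ s, Real.sin ((φ - φs s) / 2) := funext hT
  constructor
  · rintro ⟨μ, hμ⟩ t ht
    have h := hμ _ (ht.mul_nodes hn φs)
    rw [Finset.sum_eq_zero] at h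
    · have hpi : (1 / (2 * π)) ≠ 0 := one_div_ne_zero Real.two_pi_pos.ne'
      exact (mul_eq_zero.1 h).resolve_left hpi
    · intro s _
      rw [Finset.prod_eq_zero (Finset.mem_univ s) (by simp), mul_zero, mul_zero]
  · intro h
    let E := trigSpace (ntil + d + l) 0
    let K : E →ₗ[ℝ] ℝ :=
      { toFun := fun t => (1 / (2 * π)) * ∫ φ, (t : ℝ → ℝ) φ ∂σ
        map_add' := fun t u => by
          rw [← mul_add, ← integral_add (TrigPoly.integrable t.2 σ) (TrigPoly.integrable u.2 σ)]
          rfl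
        map_smul' := fun c t => by
          rw [RingHom.id_apply, smul_eq_mul, mul_left_comm, ← integral_const_mul c]
          rfl }
    let L : Fin n → E →ₗ[ℝ] ℝ := fun s => (LinearMap.proj (φs s)).comp E.subtype
    have hK : K ∈ Submodule.span ℝ (Set.range L) := by
      refine mem_span_of_iInf_ker_le_ker fun t ht => ?_
      have ht0 : ∀ s, (t : ℝ → ℝ) (φs s) = 0 := fun s =>
        LinearMap.mem_ker.1 ((Submodule.mem_iInf _).1 ht s)
      obtain ⟨u, hu, htu⟩ := TrigPoly.exists_factor hd1 hn hmono.injective hrange t.2 ht0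
      change (1 / (2 * π)) * ∫ φ, (t : ℝ → ℝ) φ ∂σ = 0
      rw [funext htu, h u hu, mul_zero]
    obtain ⟨μ, hμ⟩ := (Submodule.mem_span_range_iff_exists_fun ℝ).1 hK
    refine ⟨μ, fun t ht => ?_⟩
    have := LinearMap.congr_fun hμ (⟨t, ht⟩ : E)
    rw [LinearMap.sum_apply] at this
    exact this.symm
end

section
/- Let n ∈ ℕ, 0 ≤ m ≤ n−1, 0 ≤ φ₁ < φ₂ < ⋯ < φ_n < 2π. The following are equivalent: (a) there exist positive weights μ₁,…,μ_n > 0 with (1/2π)∫₀^{2π} e^{−ikφ} dσ(φ) = Σ_{s=1}^n μ_s e^{−ikφ_s} for all integers k with |k| ≤ n−m−1; (b) there exist complex numbers ã₀,…,ã_{n−2} with |ã_j| < 1 for j = 0,…,n−2 and ã_j = a_j for j = 0,…,n−m−2, such that the polynomial Φ̃_{n−1} generated by Φ̃₀ = 1 and Φ̃_j(z) = zΦ̃_{j−1}(z) − ã_{j−1}Φ̃*_{j−1}(z), together with some η ∈ 𝕋, satisfies zΦ̃_{n−1}(z) + ηΦ̃*_{n−1}(z) = ∏_{s=1}^n (z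 − e^{iφ_s}). -/
/-!
For (a) ⇒ (b), the measure `∑ μ_s δ_{z_s}`, `z_s = e^{iφ_s}`, has orthogonal polynomials
`Φ̃_0, …, Φ̃_n` obeying the Szegő recurrence (`opuc`), and `‖Φ̃_{j+1}‖² = (1 - |ã_j|²) ‖Φ̃_j‖²`
(`opuc_norm_succ`). A nonzero polynomial of degree below `n` has positive norm, so `|ã_j| < 1` for
`j ≤ n - 2`. The degree `n` polynomial is `∏ (z - z_s)`, of norm zero, so `|ã_{n-1}| = 1` and
`η = -ã_{n-1}`. Since `ã_j = ∫ zΦ̃_j / ∫ Φ̃*_j` uses only moments up to order `j + 1`, and the same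
formula holds for `σ`, equal moments give `ã_j = a_j`.

For (b) ⇒ (a), the Christoffel–Darboux kernel `K` built from `Φ̃_0, …, Φ̃_{n-1}` vanishes at pairs of
distinct zeros of `zΦ̃_{n-1} + ηΦ̃*_{n-1}`. Hence the matrix of values `Φ̃_j(z_s)` is inverted by its
suitably scaled conjugate transpose, and with `μ_s = 1 / K(z_s, z_s) > 0` the discrete measure makes
every `Φ̃_j`, `1 ≤ j ≤ n - 1`, orthogonal to `1` (`exists_quadrature`). As `Φ̃_j = Φ_j` for
`j ≤ n - m - 1`, these relations determine the moments recursively, as they do for `σ`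
(`moments_eq`).
-/

open MeasureTheory Real Polynomial

/-- The reversed polynomial `P*(z) = z^n conj(P(1/conj z))` at degree `n`. -/
noncomputable def pstar (n : ℕ) (P : Polynomial ℂ) : Polynomial ℂ :=
  Polynomial.reflect n (P.map (starRingEnd ℂ))

lemma natDegree_pstar_le (j : ℕ) (P : ℂ[X]) (hP : P.natDegree ≤ j) :
    (pstar j P).natDegree ≤ j := by
  refine (natDegree_reflect_le).trans ?_
  simpa using hP

lemma conj_eval_eq (P : ℂ[X]) (z : ℂ) :
    (starRingEnd ℂ) (P.eval z) =
      (P.map (starRingEnd ℂ)).eval₂ (RingHom.id ℂ) ((starRingEnd ℂ) z) := by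
  rw [← eval, eval_map, eval, hom_eval₂, RingHom.comp_id]

lemma eval_pstar (j : ℕ) (P : ℂ[X]) (hP : P.natDegree ≤ j) (z : ℂ) (hz : ‖z‖ = 1) :
    (pstar j P).eval z = z ^ j * (starRingEnd ℂ) (P.eval z) := by
  have hz0 : z ≠ 0 := by
    rintro rfl; simp at hz
  have hinv : z⁻¹ = (starRingEnd ℂ) z := Complex.inv_eq_conj hz
  have hdeg : (P.map (starRingEnd ℂ)).natDegree ≤ j := by simpa using hP
  let _ : Invertible z⁻¹ := invertibleOfNonzero (inv_ne_zero hz0)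
  have h := eval₂_reflect_mul_pow (RingHom.id ℂ) z⁻¹ j (P.map (starRingEnd ℂ)) hdeg
  rw [invOf_eq_inv, inv_inv, hinv, ← conj_eval_eq P z, ← hinv, inv_pow] at h
  rw [← h, pstar, eval]
  field_simp

/-! ### The Szegő recurrence and the Christoffel–Darboux formula -/

lemma szego_monic (at_ : ℕ → ℂ) (Φt : ℕ → ℂ[X]) (N : ℕ) (h0 : Φt 0 = 1)
    (hrec : ∀ j < N, Φt (j + 1) = X * Φt j - C (at_ j) * pstar j (Φt j)) :
    ∀ j ≤ N, (Φt j).Monic ∧ (Φt j).natDegree = j := by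
  intro j
  induction j with
  | zero => intro _; simp [h0]
  | succ j ih =>
    intro hj
    obtain ⟨hm, hd⟩ := ih (by omega)
    have hXm : (X * Φt j).Monic := monic_X.mul hm
    have hXd : (X * Φt j).natDegree = j + 1 := by
      rw [natDegree_X_mul hm.ne_zero, hd]
    have hlt : (C (at_ j) * pstar j (Φt j)).degree < (X * Φt j).degree := by
      rw [degree_eq_natDegree hXm.ne_zero, hXd]
      refine (degree_le_natDegree).trans_lt ?_
      have := (natDegree_C_mul_le (at_ j) (pstar j (Φt j))).trans
        (natDegree_pstar_le j _ hd.le)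
      exact_mod_cast Nat.lt_succ_of_le this
    rw [hrec j (by omega)]
    refine ⟨hXm.sub_of_left hlt, ?_⟩
    rw [natDegree_sub_eq_left_of_natDegree_lt, hXd]
    rw [hXd]
    exact Nat.lt_succ_of_le ((natDegree_C_mul_le (at_ j) (pstar j (Φt j))).trans
        (natDegree_pstar_le j _ hd.le))

/-- `∏_{i<j} (1 - |a_i|²)`, the squared norm of the monic orthogonal polynomial of degree `j` with
Verblunsky coefficients `a`, for a probability measure. -/
noncomputable def nrm (at_ : ℕ → ℂ) (j : ℕ) : ℝ := ∏ i ∈ Finset.range j, (1 - ‖at_ i‖ ^ 2)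

lemma nrm_pos (at_ : ℕ → ℂ) (N : ℕ) (hat : ∀ j < N, ‖at_ j‖ < 1) (k : ℕ) (hk : k ≤ N) :
    0 < nrm at_ k := by
  refine Finset.prod_pos fun i hi => ?_
  have := hat i (by have := Finset.mem_range.1 hi; omega)
  have := norm_nonneg (at_ i)
  nlinarith

/-- The Christoffel–Darboux formula for points of the unit circle, multiplied through by the
denominators. On the circle `Φ*_{k+1} = Φ*_k - conj(a_k) z Φ_k`, so passing from `k` to `k + 1`
multiplies the right-hand side by `1 - |a_k|²` and adds `(1 - z conj w) Φ_{k+1}(z) conj Φ_{k+1}(w)`. -/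
lemma christoffel_darboux (at_ : ℕ → ℂ) (Φt : ℕ → ℂ[X]) (N : ℕ) (h0 : Φt 0 = 1)
    (hat : ∀ j < N, ‖at_ j‖ < 1)
    (hrec : ∀ j < N, Φt (j + 1) = X * Φt j - C (at_ j) * pstar j (Φt j))
    (z w : ℂ) (hz : ‖z‖ = 1) (hw : ‖w‖ = 1) :
    ∀ k ≤ N, (nrm at_ k : ℂ) * ((1 - z * (starRingEnd ℂ) w) *
        ∑ j ∈ Finset.range (k + 1),
          (Φt j).eval z * (starRingEnd ℂ) ((Φt j).eval w) / (nrm at_ j : ℂ)) =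
      (pstar k (Φt k)).eval z * (starRingEnd ℂ) ((pstar k (Φt k)).eval w) -
      z * (starRingEnd ℂ) w * ((Φt k).eval z * (starRingEnd ℂ) ((Φt k).eval w)) := by
  have hmd := szego_monic at_ Φt N h0 hrec
  intro k
  induction k with
  | zero => 
    intro _
    rw [eval_pstar 0 _ (by simp [h0]) z hz, eval_pstar 0 _ (by simp [h0]) w hw]
    simp [h0, nrm]
  | succ k ih =>
    intro hk
    have ih := ih (by omega)
    have hn0 : (nrm at_ (k+1) : ℂ) ≠ 0 := by
      exact_mod_cast (nrm_pos at_ N hat (k + 1) hk).ne'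
    have hs : (nrm at_ (k + 1) : ℂ) =
        nrm at_ k * (1 - at_ k * (starRingEnd ℂ) (at_ k)) := by
      rw [nrm, Finset.prod_range_succ, ← nrm, Complex.mul_conj']
      push_cast; rfl
    have hzz : z * (starRingEnd ℂ) z = 1 := by rw [Complex.mul_conj', hz]; simp
    have hww : w * (starRingEnd ℂ) w = 1 := by rw [Complex.mul_conj', hw]; simp
    rw [Finset.sum_range_succ, mul_add, mul_add, ← mul_assoc (nrm at_ (k+1) : ℂ) _ (_ / _)]
    have e1 : ∀ x y : ℂ, (nrm at_ (k+1) : ℂ) * x * (y / (nrm at_ (k+1) : ℂ)) = x * y := by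
      intro x y; field_simp
    rw [e1, hs]
    rw [mul_right_comm, ih]
    have st : ∀ z : ℂ, ‖z‖ = 1 → z * (starRingEnd ℂ) z = 1 →
        (pstar (k+1) (Φt (k+1))).eval z =
        (pstar k (Φt k)).eval z - (starRingEnd ℂ) (at_ k) * (z * (Φt k).eval z) := by
      intro z hz hzz
      rw [eval_pstar _ _ (hmd (k+1) hk).2.le z hz, hrec k (by omega)]
      have hd := (hmd k (by omega)).2.le
      have hzk : z ^ k * (starRingEnd ℂ) z ^ k = 1 := by rw [← mul_pow, hzz, one_pow]
      simp only [eval_sub, eval_mul, eval_X, eval_C, map_sub, map_mul,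
        eval_pstar _ _ hd z hz, map_pow, Complex.conj_conj]
      linear_combination (z ^ k * (starRingEnd ℂ) (eval z (Φt k))) * hzz -
        (starRingEnd ℂ) (at_ k) * z * (Φt k).eval z * hzk
    rw [st z hz hzz, st w hw hww, hrec k (by omega)]
    simp only [eval_sub, eval_mul, eval_X, eval_C, map_sub, map_mul, Complex.conj_conj]
    ring

/-- Szegő quadrature at the zeros of a paraorthogonal polynomial: the weights are the reciprocals
of the diagonal Christoffel–Darboux kernel. Only orthogonality to the constants is recorded, as it
already determines the moments of the quadrature. -/
lemma exists_quadrature (n : ℕ) (hn : 1 ≤ n) (at_ : ℕ → ℂ) (Φt : ℕ → ℂ[X]) (h0 : Φt 0 = 1)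
    (hat : ∀ j < n - 1, ‖at_ j‖ < 1)
    (hrec : ∀ j < n - 1, Φt (j + 1) = X * Φt j - C (at_ j) * pstar j (Φt j))
    (z : Fin n → ℂ) (hz : ∀ s, ‖z s‖ = 1) (hinj : Function.Injective z)
    (η : ℂ) (hη : ‖η‖ = 1)
    (hroot : ∀ s, (X * Φt (n - 1) + C η * pstar (n - 1) (Φt (n - 1))).eval (z s) = 0) :
    ∃ μ : Fin n → ℝ, (∀ s, 0 < μ s) ∧
      ∀ j < n, ∑ s, (μ s : ℂ) * (Φt j).eval (z s) = if j = 0 then 1 else 0 := by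
  have hpos := nrm_pos at_ (n - 1) hat
  set K : Fin n → ℝ := fun s => ∑ j ∈ Finset.range n, ‖(Φt j).eval (z s)‖ ^ 2 / nrm at_ j with hK
  have hKpos : ∀ s, 0 < K s := by
    intro s
    refine Finset.sum_pos' (fun j hj => ?_) ⟨0, by simp; omega, ?_⟩
    · have := hpos j (by have := Finset.mem_range.1 hj; omega)
      positivity
    · simp [h0, nrm]
  have hKc : ∀ s, (K s : ℂ) = ∑ j ∈ Finset.range n,
      (Φt j).eval (z s) * (starRingEnd ℂ) ((Φt j).eval (z s)) / (nrm at_ j : ℂ) := by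
    intro s
    simp [hK, Complex.mul_conj']
  have hoff : ∀ s t, s ≠ t → ∑ j ∈ Finset.range n,
      (Φt j).eval (z s) * (starRingEnd ℂ) ((Φt j).eval (z t)) / (nrm at_ j : ℂ) = 0 := by
    intro s t hst
    have cd := christoffel_darboux at_ Φt (n - 1) h0 hat hrec (z s) (z t) (hz s) (hz t)
      (n - 1) le_rfl
    rw [Nat.sub_add_cancel hn] at cd
    -- At the nodes `z Φ_{n-1} = -η Φ*_{n-1}` with `|η| = 1`, so the two terms of the
    -- Christoffel–Darboux formula cancel.
    have hηη : η * (starRingEnd ℂ) η = 1 := by rw [Complex.mul_conj', hη]; simp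
    have hs := hroot s
    have ht := congrArg (starRingEnd ℂ) (hroot t)
    simp only [eval_add, eval_mul, eval_X, eval_C, map_add, map_mul, map_zero] at hs ht
    have hzero : (pstar (n-1) (Φt (n-1))).eval (z s) *
        (starRingEnd ℂ) ((pstar (n-1) (Φt (n-1))).eval (z t)) -
        z s * (starRingEnd ℂ) (z t) *
          ((Φt (n-1)).eval (z s) * (starRingEnd ℂ) ((Φt (n-1)).eval (z t))) = 0 := by
      linear_combination (-(eval (z s) (pstar (n-1) (Φt (n-1)))) * 
          (starRingEnd ℂ) ((pstar (n-1) (Φt (n-1))).eval (z t))) * hηη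
        + (η * eval (z s) (pstar (n-1) (Φt (n-1)))) * ht
        - ((starRingEnd ℂ) (z t) * (starRingEnd ℂ) ((Φt (n-1)).eval (z t))) * hs
    rw [hzero] at cd
    have hn0 : (nrm at_ (n-1) : ℂ) ≠ 0 := by exact_mod_cast (hpos _ le_rfl).ne'
    have hzt : 1 - z s * (starRingEnd ℂ) (z t) ≠ 0 := by
      rw [← Complex.inv_eq_conj (hz t), sub_ne_zero]
      intro h
      have ht0 : z t ≠ 0 := by intro h; have := hz t; simp [h] at this
      field_simp at h
      exact hst (hinj h.symm)
    simpa [hn0, hzt] using cd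
  refine ⟨fun s => (K s)⁻¹, fun s => inv_pos.2 (hKpos s), ?_⟩
  -- `A B = 1` says that the kernel is diagonal on the nodes; the first row of `B A = 1` is the
  -- quadrature formula.
  let A : Matrix (Fin n) (Fin n) ℂ := fun s j => (Φt j).eval (z s)
  let B : Matrix (Fin n) (Fin n) ℂ := fun j t =>
    (starRingEnd ℂ) ((Φt j).eval (z t)) / (nrm at_ j : ℂ) * ((K t : ℂ))⁻¹
  have hAB : A * B = 1 := by
    ext s t
    rw [Matrix.mul_apply]
    have : ∑ j, A s j * B j t = (∑ j ∈ Finset.range n,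
      (Φt j).eval (z s) * (starRingEnd ℂ) ((Φt j).eval (z t)) / (nrm at_ j : ℂ)) * (K t : ℂ)⁻¹ := by
      rw [Finset.sum_range, Finset.sum_mul]
      refine Finset.sum_congr rfl fun j _ => ?_
      simp only [A, B]; ring
    rw [this]
    by_cases hst : s = t
    · subst hst
      rw [← hKc, Matrix.one_apply_eq]
      exact mul_inv_cancel₀ (by exact_mod_cast (hKpos s).ne')
    · rw [hoff s t hst, Matrix.one_apply_ne hst, zero_mul]
  have hBA : B * A = 1 := mul_eq_one_comm.1 hAB
  intro j hj
  have h := congrFun (congrFun hBA ⟨0, hn⟩) ⟨j, hj⟩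
  rw [Matrix.mul_apply, Matrix.one_apply] at h
  simp only [A, B, h0, nrm, Fin.mk.injEq] at h
  simpa [eq_comm] using h

/-! ### Orthogonal polynomials of a measure with `n` atoms -/

/-- Integration of polynomials against the discrete measure `∑ μ_s δ_{z_s}`. -/
noncomputable def discL {n : ℕ} (μ : Fin n → ℝ) (z : Fin n → ℂ) (P : ℂ[X]) : ℂ :=
  ∑ s, (μ s : ℂ) * P.eval (z s)

/-- The monic orthogonal polynomials of `∑ μ_s δ_{z_s}`, generated by the Szegő recurrence; each
coefficient is chosen to make the next polynomial orthogonal to the constants. For degrees above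
`n` the coefficient involves a division by zero and the values have no meaning. -/
noncomputable def opuc {n : ℕ} (μ : Fin n → ℝ) (z : Fin n → ℂ) : ℕ → ℂ[X]
  | 0 => 1
  | j + 1 => X * opuc μ z j - C (discL μ z (X * opuc μ z j) /
      discL μ z (pstar j (opuc μ z j))) * pstar j (opuc μ z j)

/-- The Verblunsky coefficients of `∑ μ_s δ_{z_s}`. -/
noncomputable def opucCoeff {n : ℕ} (μ : Fin n → ℝ) (z : Fin n → ℂ) (j : ℕ) : ℂ :=
  discL μ z (X * opuc μ z j) / discL μ z (pstar j (opuc μ z j))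

section
variable {n : ℕ} (μ : Fin n → ℝ) (z : Fin n → ℂ)

lemma opuc_succ (j : ℕ) : opuc μ z (j + 1) =
    X * opuc μ z j - C (opucCoeff μ z j) * pstar j (opuc μ z j) := rfl

lemma opuc_monic (j : ℕ) : (opuc μ z j).Monic ∧ (opuc μ z j).natDegree = j :=
  szego_monic (opucCoeff μ z) (opuc μ z) j rfl (fun _ _ => rfl) j le_rfl

lemma orth_of_pow (P : ℂ[X]) (k : ℕ)
    (h : ∀ i < k, ∑ s, (μ s : ℂ) * (P.eval (z s) * (starRingEnd ℂ) (z s ^ i)) = 0)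
    (Q : ℂ[X]) (hQ : Q.degree < k) :
    ∑ s, (μ s : ℂ) * (P.eval (z s) * (starRingEnd ℂ) (Q.eval (z s))) = 0 := by
  by_cases hQ0 : Q = 0
  · simp [hQ0]
  have hQ' : Q.natDegree < k := (natDegree_lt_iff_degree_lt hQ0).2 hQ
  simp only [eval_eq_sum_range' hQ', map_sum, Finset.mul_sum]
  rw [Finset.sum_comm]
  refine Finset.sum_eq_zero fun i hi => ?_
  have := h i (Finset.mem_range.1 hi)
  rw [← mul_zero ((starRingEnd ℂ) (Q.coeff i)), ← this, Finset.mul_sum]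
  refine Finset.sum_congr rfl fun s _ => ?_
  rw [map_mul]; ring

/-- If the monic `P` of degree `j` is orthogonal to lower degrees, then `∫ P* = ‖P‖²`, because
`∫ P*` is the conjugate of `⟨P, z^j⟩ = ⟨P, P⟩`. -/
lemma disc_pstar_eq (hz : ∀ s, ‖z s‖ = 1) (P : ℂ[X]) (j : ℕ) (hP : P.Monic)
    (hd : P.natDegree = j)
    (h : ∀ i < j, ∑ s, (μ s : ℂ) * (P.eval (z s) * (starRingEnd ℂ) (z s ^ i)) = 0) :
    discL μ z (pstar j P) = ((∑ s, μ s * ‖P.eval (z s)‖ ^ 2 : ℝ) : ℂ) := by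
  have hlt : (X ^ j - P : ℂ[X]).degree < (j : WithBot ℕ) := by
    have := degree_sub_lt_left (p := X ^ j) (q := P)
      (by rw [degree_X_pow, degree_eq_natDegree hP.ne_zero, hd]) (pow_ne_zero _ X_ne_zero)
      (by rw [hP.leadingCoeff, (monic_X_pow j).leadingCoeff])
    simpa using this
  have h1 := congrArg (starRingEnd ℂ) (orth_of_pow μ z P j h _ hlt)
  rw [map_zero, map_sum] at h1
  rw [discL, ← sub_eq_zero, ← h1, Complex.ofReal_sum, ← Finset.sum_sub_distrib]
  refine Finset.sum_congr rfl fun s _ => ?_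
  rw [eval_pstar j P hd.le _ (hz s)]
  simp only [map_mul, Complex.conj_ofReal, Complex.conj_conj, eval_sub, eval_pow, eval_X]
  push_cast
  rw [← Complex.mul_conj']
  ring

lemma normSq_pos (hμ : ∀ s, 0 < μ s) (hinj : Function.Injective z)
    (P : ℂ[X]) (hP : P ≠ 0) (hd : P.natDegree < n) :
    0 < ∑ s, μ s * ‖P.eval (z s)‖ ^ 2 := by
  by_contra hcon
  have hnn : ∀ s ∈ Finset.univ, 0 ≤ μ s * ‖P.eval (z s)‖ ^ 2 := fun s _ => by
    have := hμ s; positivity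
  have h0 := le_antisymm (not_lt.1 hcon) (Finset.sum_nonneg hnn)
  rw [Finset.sum_eq_zero_iff_of_nonneg hnn] at h0
  refine hP (eq_zero_of_natDegree_lt_card_of_eval_eq_zero P hinj (fun s => ?_) (by simpa using hd))
  simpa [(hμ s).ne'] using h0 s (Finset.mem_univ s)

lemma opuc_orth (hμ : ∀ s, 0 < μ s) (hz : ∀ s, ‖z s‖ = 1)
    (hinj : Function.Injective z) : ∀ j ≤ n, ∀ i < j,
    ∑ s, (μ s : ℂ) * ((opuc μ z j).eval (z s) * (starRingEnd ℂ) (z s ^ i)) = 0 := by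
  intro j
  induction j with
  | zero => intro _ i hi; omega
  | succ j ih =>
    intro hj i hi
    have ih := ih (by omega)
    obtain ⟨hm, hd⟩ := opuc_monic μ z j
    have hzz : ∀ s, z s * (starRingEnd ℂ) (z s) = 1 := fun s => by
      rw [Complex.mul_conj', hz]; simp
    -- Orthogonality to `1` is the choice of the coefficient; orthogonality to `z^(i+1)` is
    -- inherited from `Φ_j ⊥ z^i` and `Φ_j ⊥ z^(j-i-1)`.
    rcases i with _ | i
    · have hne : discL μ z (pstar j (opuc μ z j)) ≠ 0 := by
        rw [disc_pstar_eq μ z hz _ j hm hd ih]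
        exact_mod_cast (normSq_pos μ z hμ hinj _ hm.ne_zero (by omega)).ne'
      have : discL μ z (X * opuc μ z j) - opucCoeff μ z j * discL μ z (pstar j (opuc μ z j)) = 0 := by
        rw [opucCoeff, div_mul_cancel₀ _ hne, sub_self]
      rw [← this, opuc_succ, discL, discL, Finset.mul_sum, ← Finset.sum_sub_distrib]
      refine Finset.sum_congr rfl fun s _ => ?_
      simp; ring
    · have hA := ih i (by omega)
      have hB := congrArg (starRingEnd ℂ) (ih (j - (i + 1)) (by omega))
      rw [map_zero, map_sum] at hB
      have key : ∑ s, (μ s : ℂ) *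
            ((opuc μ z (j + 1)).eval (z s) * (starRingEnd ℂ) (z s ^ (i + 1))) =
          ∑ s, (μ s : ℂ) * ((opuc μ z j).eval (z s) * (starRingEnd ℂ) (z s ^ i)) -
          opucCoeff μ z j * ∑ s, (starRingEnd ℂ) ((μ s : ℂ) *
            ((opuc μ z j).eval (z s) * (starRingEnd ℂ) (z s ^ (j - (i + 1))))) := by
        rw [opuc_succ, Finset.mul_sum, ← Finset.sum_sub_distrib]
        refine Finset.sum_congr rfl fun s _ => ?_
        have hpow : z s ^ j * (starRingEnd ℂ) (z s) ^ (i + 1) = z s ^ (j - (i + 1)) := by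
          conv_lhs => rw [← Nat.sub_add_cancel (show i + 1 ≤ j by omega), pow_add, mul_assoc,
            ← mul_pow, hzz]
          simp
        simp only [eval_sub, eval_mul, eval_X, eval_C, eval_pstar j _ hd.le _ (hz s), map_mul,
          map_pow, Complex.conj_conj, Complex.conj_ofReal]
        rw [← hpow]
        linear_combination
          ((μ s : ℂ) * eval (z s) (opuc μ z j) * (starRingEnd ℂ) (z s) ^ i) * hzz s
      rw [key, hA, hB, mul_zero, sub_zero]

/-- Pythagoras for `zΦ_j = Φ_{j+1} + a_j Φ*_j`, whose summands are orthogonal. -/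
lemma opuc_norm_succ (hμ : ∀ s, 0 < μ s) (hz : ∀ s, ‖z s‖ = 1)
    (hinj : Function.Injective z) (j : ℕ) (hj : j + 1 ≤ n) :
    ∑ s, μ s * ‖(opuc μ z (j + 1)).eval (z s)‖ ^ 2 =
      (1 - ‖opucCoeff μ z j‖ ^ 2) * ∑ s, μ s * ‖(opuc μ z j).eval (z s)‖ ^ 2 := by
  obtain ⟨hm, hd⟩ := opuc_monic μ z j
  have hdeg : (pstar j (opuc μ z j)).degree < (j + 1 : ℕ) :=
    (degree_le_of_natDegree_le (natDegree_pstar_le j _ hd.le)).trans_lt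
      (by exact_mod_cast Nat.lt_succ_self j)
  have ho := orth_of_pow μ z _ (j + 1) (opuc_orth μ z hμ hz hinj (j + 1) hj) _ hdeg
  have ho' := congrArg (starRingEnd ℂ) ho
  rw [map_zero, map_sum] at ho'
  rw [← Complex.ofReal_inj]
  push_cast
  simp only [← Complex.mul_conj']
  set c := opucCoeff μ z j
  have key : ∑ s, (μ s : ℂ) * ((opuc μ z (j + 1)).eval (z s) *
        (starRingEnd ℂ) ((opuc μ z (j + 1)).eval (z s))) -
      (1 - c * (starRingEnd ℂ) c) * ∑ s, (μ s : ℂ) * ((opuc μ z j).eval (z s) *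
        (starRingEnd ℂ) ((opuc μ z j).eval (z s))) =
      -c * ∑ s, (starRingEnd ℂ) ((μ s : ℂ) * ((opuc μ z (j + 1)).eval (z s) *
        (starRingEnd ℂ) ((pstar j (opuc μ z j)).eval (z s)))) -
      (starRingEnd ℂ) c * ∑ s, (μ s : ℂ) * ((opuc μ z (j + 1)).eval (z s) *
        (starRingEnd ℂ) ((pstar j (opuc μ z j)).eval (z s))) := by
    rw [Finset.mul_sum, Finset.mul_sum, Finset.mul_sum, ← Finset.sum_sub_distrib,
      ← Finset.sum_sub_distrib]
    refine Finset.sum_congr rfl fun s _ => ?_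
    have hzz : z s * (starRingEnd ℂ) (z s) = 1 := by rw [Complex.mul_conj', hz]; simp
    have hzj : z s ^ j * (starRingEnd ℂ) (z s) ^ j = 1 := by rw [← mul_pow, hzz, one_pow]
    rw [opuc_succ]
    simp only [eval_sub, eval_mul, eval_X, eval_C, eval_pstar j _ hd.le _ (hz s), map_mul, map_sub,
      map_pow, Complex.conj_conj, Complex.conj_ofReal]
    set p := eval (z s) (opuc μ z j)
    linear_combination (μ s * p * (starRingEnd ℂ) p) * hzz
      - (μ s * c * (starRingEnd ℂ) c * p * (starRingEnd ℂ) p) * hzj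
  rw [ho, ho', mul_zero, mul_zero, sub_zero] at key
  exact sub_eq_zero.1 key

lemma opucCoeff_lt (hμ : ∀ s, 0 < μ s) (hz : ∀ s, ‖z s‖ = 1)
    (hinj : Function.Injective z) (j : ℕ) (hj : j + 1 < n) : ‖opucCoeff μ z j‖ < 1 := by
  have h := opuc_norm_succ μ z hμ hz hinj j hj.le
  have p1 := normSq_pos μ z hμ hinj (opuc μ z (j+1)) (opuc_monic μ z _).1.ne_zero
    (by rw [(opuc_monic μ z _).2]; exact hj)
  have p0 := normSq_pos μ z hμ hinj (opuc μ z j) (opuc_monic μ z _).1.ne_zero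
    (by rw [(opuc_monic μ z _).2]; omega)
  rw [h] at p1
  have := pos_of_mul_pos_left p1 p0.le
  have := norm_nonneg (opucCoeff μ z j)
  nlinarith

/-- The difference of the two sides has degree below `n`, and it has norm zero because the product
vanishes at all nodes. -/
lemma opuc_last (hμ : ∀ s, 0 < μ s) (hz : ∀ s, ‖z s‖ = 1)
    (hinj : Function.Injective z) : opuc μ z n = ∏ s, (X - C (z s)) := by
  obtain ⟨hm, hd⟩ := opuc_monic μ z n
  set p : ℂ[X] := ∏ s, (X - C (z s)) with hp
  have hpm : p.Monic := monic_prod_of_monic _ _ fun s _ => monic_X_sub_C _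
  have hpd : p.natDegree = n := by
    rw [hp, natDegree_prod_of_monic _ _ fun s _ => monic_X_sub_C (z s)]; simp
  have hroot : ∀ s, p.eval (z s) = 0 := fun s => by
    rw [hp, eval_prod]
    exact Finset.prod_eq_zero (Finset.mem_univ s) (by simp)
  have hlt : (opuc μ z n - p).degree < n := by
    have := degree_sub_lt_left (p := opuc μ z n) (q := p)
      (by rw [degree_eq_natDegree hm.ne_zero, degree_eq_natDegree hpm.ne_zero, hd, hpd]) hm.ne_zero
      (by rw [hm.leadingCoeff, hpm.leadingCoeff])
    rwa [degree_eq_natDegree hm.ne_zero, hd] at this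
  by_contra hne
  have hne := sub_ne_zero.2 hne
  have h := orth_of_pow μ z _ n (opuc_orth μ z hμ hz hinj n le_rfl) _ hlt
  have hpos := normSq_pos μ z hμ hinj _ hne ((natDegree_lt_iff_degree_lt hne).2 hlt)
  refine hpos.ne' ?_
  rw [← Complex.ofReal_inj]
  push_cast
  simp only [← Complex.mul_conj']
  rw [← h]
  refine Finset.sum_congr rfl fun s _ => ?_
  simp [hroot]

lemma opucCoeff_last (hμ : ∀ s, 0 < μ s) (hz : ∀ s, ‖z s‖ = 1)
    (hinj : Function.Injective z) (hn : 1 ≤ n) : ‖opucCoeff μ z (n - 1)‖ = 1 := by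
  have h := opuc_norm_succ μ z hμ hz hinj (n - 1) (by omega)
  have p0 := normSq_pos μ z hμ hinj (opuc μ z (n - 1)) (opuc_monic μ z _).1.ne_zero
    (by rw [(opuc_monic μ z _).2]; omega)
  rw [Nat.sub_add_cancel hn, opuc_last μ z hμ hz hinj] at h
  have hzero : ∑ s, μ s * ‖(∏ t, (X - C (z t))).eval (z s)‖ ^ 2 = 0 := by
    refine Finset.sum_eq_zero fun s _ => ?_
    rw [eval_prod, Finset.prod_eq_zero (Finset.mem_univ s) (by simp)]
    simp
  rw [hzero] at h
  have := (mul_eq_zero.1 h.symm).resolve_right p0.ne'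
  have h0 := norm_nonneg (opucCoeff μ z (n - 1))
  nlinarith

end

/-! ### Moments -/

section
variable (σ : Measure ℝ)

/-- Integration of polynomials in `e^{iφ}` against `σ / 2π`. -/
noncomputable def contL (P : ℂ[X]) : ℂ :=
  (1 / (2 * (π : ℂ))) * ∫ φ : ℝ, P.eval (Complex.exp (Complex.I * (φ : ℂ))) ∂σ

lemma norm_exp_I (φ : ℝ) : ‖Complex.exp (Complex.I * (φ : ℂ))‖ = 1 := by
  rw [mul_comm]; exact Complex.norm_exp_ofReal_mul_I φ

lemma integrable_eval [IsFiniteMeasure σ] (P : ℂ[X]) :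
    Integrable (fun φ : ℝ => P.eval (Complex.exp (Complex.I * (φ : ℂ)))) σ := by
  obtain ⟨M, hM⟩ := (isCompact_sphere (0 : ℂ) 1).exists_bound_of_continuousOn
    P.continuous.continuousOn
  refine Integrable.of_bound (C := M) ?_ (Filter.Eventually.of_forall fun φ => hM _ ?_)
  · exact (P.continuous.comp (by fun_prop)).aestronglyMeasurable
  · simp

lemma contL_add [IsFiniteMeasure σ] (P Q : ℂ[X]) : contL σ (P + Q) = contL σ P + contL σ Q := by
  simp only [contL, eval_add]
  rw [integral_add (integrable_eval σ P) (integrable_eval σ Q), mul_add]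

lemma contL_C_mul (c : ℂ) (P : ℂ[X]) : contL σ (C c * P) = c * contL σ P := by
  simp only [contL, eval_mul, eval_C]
  rw [integral_const_mul]; ring

lemma discL_add {n : ℕ} (μ : Fin n → ℝ) (z : Fin n → ℂ) (P Q : ℂ[X]) :
    discL μ z (P + Q) = discL μ z P + discL μ z Q := by
  simp only [discL, eval_add, mul_add, Finset.sum_add_distrib]

lemma discL_C_mul {n : ℕ} (μ : Fin n → ℝ) (z : Fin n → ℂ) (c : ℂ) (P : ℂ[X]) :
    discL μ z (C c * P) = c * discL μ z P := by
  simp only [discL, eval_mul, eval_C, Finset.mul_sum]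
  exact Finset.sum_congr rfl fun s _ => by ring

lemma contL_eq_discL [IsFiniteMeasure σ] {n : ℕ} (μ : Fin n → ℝ) (z : Fin n → ℂ) (N : ℕ)
    (h : ∀ k ≤ N, contL σ (X ^ k) = discL μ z (X ^ k)) (P : ℂ[X]) (hP : P.natDegree ≤ N) :
    contL σ P = discL μ z P := by
  refine induction_with_natDegree_le (fun P => contL σ P = discL μ z P) N ?_ ?_ ?_ P hP
  · simp [contL, discL]
  · intro k r _ hk
    rw [contL_C_mul, discL_C_mul, h k hk]
  · intro P Q _ _ hp hq
    rw [contL_add, discL_add, hp, hq]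

/-- The moments are determined recursively by the integrals of monic polynomials of every degree. -/
lemma moments_eq [IsFiniteMeasure σ] {n : ℕ} (μ : Fin n → ℝ) (z : Fin n → ℂ) (Φ : ℕ → ℂ[X]) (N : ℕ)
    (hm : ∀ k, (Φ k).Monic) (hd : ∀ k, (Φ k).natDegree = k)
    (h : ∀ k ≤ N, contL σ (Φ k) = discL μ z (Φ k)) :
    ∀ k ≤ N, contL σ (X ^ k) = discL μ z (X ^ k) := by
  intro k
  induction k using Nat.strong_induction_on with
  | _ k ih =>
    intro hk
    have hlt : (Φ k - X ^ k).degree < (k : WithBot ℕ) := by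
      have := degree_sub_lt_left (p := Φ k) (q := X ^ k)
        (by rw [degree_X_pow, degree_eq_natDegree (hm k).ne_zero, hd]) (hm k).ne_zero
        (by rw [(hm k).leadingCoeff, (monic_X_pow k).leadingCoeff])
      rwa [degree_eq_natDegree (hm k).ne_zero, hd] at this
    have hR : contL σ (Φ k - X ^ k) = discL μ z (Φ k - X ^ k) := by
      by_cases h0 : Φ k - X ^ k = 0
      · simp [h0, contL, discL]
      have hnd := (natDegree_lt_iff_degree_lt h0).2 hlt
      exact contL_eq_discL σ μ z (k - 1) (fun i hi => ih i (by omega) (by omega)) _ (by omega)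
    have e := h k hk
    rw [← add_sub_cancel (X ^ k) (Φ k), contL_add, discL_add, hR] at e
    exact add_right_cancel e

end

lemma exp_neg_mul (l : ℕ) (x : ℝ) :
    Complex.exp (-((-(l : ℤ) : ℤ) : ℂ) * Complex.I * (x : ℂ)) =
      Complex.exp (Complex.I * (x : ℂ)) ^ l := by
  rw [← Complex.exp_nat_mul]; congr 1; push_cast; ring

lemma exp_pos_mul (l : ℕ) (x : ℝ) :
    Complex.exp (-((l : ℤ) : ℂ) * Complex.I * (x : ℂ)) =
      (starRingEnd ℂ) (Complex.exp (Complex.I * (x : ℂ)) ^ l) := by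
  rw [← Complex.exp_nat_mul, ← Complex.exp_conj]; congr 1
  simp; ring

/-- Negative frequencies give the conjugate moments, so matching moments reduces to matching the
integrals of `z^k` for `k ≥ 0`. -/
lemma moments_iff (σ : Measure ℝ) {n : ℕ} (μ : Fin n → ℝ) (φs : Fin n → ℝ) (N : ℕ) :
    (∀ k : ℤ, |k| ≤ (N : ℤ) →
      (1 / (2 * (π : ℂ))) * ∫ φ : ℝ, Complex.exp (-(k : ℂ) * Complex.I * (φ : ℂ)) ∂σ =
        ∑ s, (μ s : ℂ) * Complex.exp (-(k : ℂ) * Complex.I * (φs s : ℂ))) ↔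
    ∀ k ≤ N, contL σ (X ^ k) =
      discL μ (fun s => Complex.exp (Complex.I * (φs s : ℂ))) (X ^ k) := by
  constructor
  · intro h k hk
    have := h (-(k : ℤ)) (by rw [abs_neg, Nat.abs_cast]; exact_mod_cast hk)
    simp only [exp_neg_mul] at this
    simpa [contL, discL] using this
  · intro h k hk
    obtain ⟨l, rfl | rfl⟩ := k.eq_nat_or_neg
    · have := congrArg (starRingEnd ℂ) (h l (by simpa using hk))
      simp only [contL, discL, map_mul, ← integral_conj, map_sum, eval_pow, eval_X,
        Complex.conj_ofReal] at this
      have h2 : (starRingEnd ℂ) (1 / (2 * (π : ℂ))) = 1 / (2 * (π : ℂ)) := by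
        rw [← Complex.ofReal_ofNat, ← Complex.ofReal_mul, ← Complex.ofReal_one,
          ← Complex.ofReal_div, Complex.conj_ofReal]
      simp only [exp_pos_mul, ← this, h2]
    · have := h l (by simpa using hk)
      simp only [exp_neg_mul]
      simpa [contL, discL] using this

lemma exp_nodes_injective {n : ℕ} (φs : Fin n → ℝ) (hmono : StrictMono φs)
    (hrange : ∀ s, φs s ∈ Set.Ico 0 (2 * π)) :
    Function.Injective fun s => Complex.exp (Complex.I * (φs s : ℂ)) := by
  intro s t h
  refine hmono.injective ?_
  have h' : Circle.exp (φs s) = Circle.exp (φs t) := by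
    ext; simpa [mul_comm] using h
  exact Circle.exp_injOn_Ico (by simp) (hrange s) (hrange t) h'

theorem stmt4
    (σ : Measure ℝ) [IsFiniteMeasure σ]
    (hsupp : σ (Set.Icc 0 (2 * π))ᶜ = 0)
    (hnorm : (1 / (2 * π)) * ∫ _φ, (1 : ℝ) ∂σ = 1)
    -- the orthogonal polynomials `Φ` and their Verblunsky coefficients `a`
    (Φ : ℕ → Polynomial ℂ) (hΦ0 : Φ 0 = 1)
    (hΦmonic : ∀ k, (Φ k).Monic) (hΦdeg : ∀ k, (Φ k).natDegree = k)
    (hΦorth : ∀ k : ℕ, ∀ j < k,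
      ∫ φ : ℝ, Complex.exp (-(j : ℂ) * Complex.I * (φ : ℂ)) *
        (Φ k).eval (Complex.exp (Complex.I * (φ : ℂ))) ∂σ = 0)
    (a : ℕ → ℂ) (ha : ∀ j, ‖a j‖ < 1)
    (hrec : ∀ j, Φ (j + 1) = X * Φ j - C (a j) * pstar j (Φ j))
    -- the nodes
    (n : ℕ) (hn : 1 ≤ n) (m : ℕ) (hm : m ≤ n - 1)
    (φs : Fin n → ℝ) (hmono : StrictMono φs)
    (hrange : ∀ s, φs s ∈ Set.Ico 0 (2 * π)) :
    -- (a)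
    (∃ μ : Fin n → ℝ, (∀ s, 0 < μ s) ∧
        ∀ k : ℤ, |k| ≤ (n : ℤ) - m - 1 →
          (1 / (2 * (π : ℂ))) * ∫ φ : ℝ, Complex.exp (-(k : ℂ) * Complex.I * (φ : ℂ)) ∂σ =
            ∑ s, (μ s : ℂ) * Complex.exp (-(k : ℂ) * Complex.I * (φs s : ℂ))) ↔
    -- (b)
    (∃ at_ : ℕ → ℂ,
        (∀ j < n - 1, ‖at_ j‖ < 1) ∧ (∀ j, j + m + 1 < n → at_ j = a j) ∧
        ∃ Φt : ℕ → Polynomial ℂ, Φt 0 = 1 ∧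
          (∀ j < n - 1, Φt (j + 1) = X * Φt j - C (at_ j) * pstar j (Φt j)) ∧
          ∃ η : ℂ, ‖η‖ = 1 ∧
            X * Φt (n - 1) + C η * pstar (n - 1) (Φt (n - 1)) =
              ∏ s, (X - C (Complex.exp (Complex.I * (φs s : ℂ))))) := by
  have hNcast : (n : ℤ) - m - 1 = ((n - m - 1 : ℕ) : ℤ) := by omega
  set z : Fin n → ℂ := fun s => Complex.exp (Complex.I * (φs s : ℂ)) with hzdef
  have hz : ∀ s, ‖z s‖ = 1 := fun s => norm_exp_I (φs s)
  have hinj : Function.Injective z := exp_nodes_injective φs hmono hrange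
  have hc0 : contL σ 1 = 1 := by
    have := congrArg (fun x : ℝ => (x : ℂ)) hnorm
    simpa [contL] using this
  have hck : ∀ k, contL σ (Φ (k + 1)) = 0 := by
    intro k
    have := hΦorth (k + 1) 0 (by omega)
    simp only [Nat.cast_zero, neg_zero, zero_mul, Complex.exp_zero, one_mul] at this
    rw [contL, this, mul_zero]
  rw [hNcast]
  simp only [moments_iff]
  rw [← hzdef]
  constructor
  · rintro ⟨μ, hμ, hmom⟩
    have hLL := contL_eq_discL σ μ z (n - m - 1) hmom
    have hΦt : ∀ j ≤ n - m - 1, opuc μ z j = Φ j ∧ ∀ i < j, opucCoeff μ z i = a i := by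
      intro j
      induction j with
      | zero => intro _; exact ⟨hΦ0.symm, fun i hi => by omega⟩
      | succ j ih =>
        intro hj
        obtain ⟨e, hi⟩ := ih (by omega)
        obtain ⟨hm', hd'⟩ := opuc_monic μ z j
        have hne : discL μ z (pstar j (opuc μ z j)) ≠ 0 := by
          rw [disc_pstar_eq μ z hz _ j hm' hd' (opuc_orth μ z hμ hz hinj j (by omega))]
          exact_mod_cast (normSq_pos μ z hμ hinj _ hm'.ne_zero (by omega)).ne'
        have h1 := hck j
        rw [hLL _ (by rw [hΦdeg]; exact hj), hrec j, sub_eq_add_neg, ← neg_mul, ← C_neg,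
          discL_add, discL_C_mul, ← e] at h1
        have hco : opucCoeff μ z j = a j := by
          rw [opucCoeff, div_eq_iff hne]
          linear_combination h1
        refine ⟨by rw [opuc_succ, hrec, e, hco], fun i hij => ?_⟩
        rcases Nat.lt_succ_iff_lt_or_eq.1 hij with h | rfl
        · exact hi i h
        · exact hco
    refine ⟨opucCoeff μ z, fun j hj => opucCoeff_lt μ z hμ hz hinj j (by omega),
      fun j hj => (hΦt (n - m - 1) le_rfl).2 j (by omega), opuc μ z, rfl, fun _ _ => rfl,
      -opucCoeff μ z (n - 1), by rw [norm_neg, opucCoeff_last μ z hμ hz hinj hn], ?_⟩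
    have h1 := opuc_succ μ z (n - 1)
    rw [Nat.sub_add_cancel hn, opuc_last μ z hμ hz hinj] at h1
    rw [h1, C_neg]; ring
  · rintro ⟨at_, hat, hata, Φt, h0, hrect, η, hη, hprod⟩
    have hroot : ∀ s, (X * Φt (n - 1) + C η * pstar (n - 1) (Φt (n - 1))).eval (z s) = 0 := by
      intro s
      rw [hprod, eval_prod]
      exact Finset.prod_eq_zero (Finset.mem_univ s) (by simp [hzdef])
    obtain ⟨μ, hμ, hquad⟩ := exists_quadrature n hn at_ Φt h0 hat hrect z hz hinj η hη hroot
    refine ⟨μ, hμ, ?_⟩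
    have hΦt : ∀ j ≤ n - m - 1, Φt j = Φ j := by
      intro j
      induction j with
      | zero => intro _; rw [h0, hΦ0]
      | succ j ih =>
        intro hj
        rw [hrect j (by omega), hrec j, ih (by omega), hata j (by omega)]
    refine moments_eq σ μ z Φ _ hΦmonic hΦdeg fun k hk => ?_
    have hq := hquad k (by omega)
    rw [hΦt k hk] at hq
    rw [discL, hq]
    rcases k with _ | k
    · simp [hΦ0, hc0]
    · simp [hck]
end

section
/- Let n ∈ ℕ, 0 ≤ m ≤ n−1, 0 ≤ φ₁ < φ₂ < ⋯ < φ_n < 2π, and let c_k = (1/2π)∫₀^{2π} e^{−ikφ} dσ(φ). The following are equivalent: (a) there exist positive weights μ₁,…,μ_n > 0 with c_k = Σ_{s=1}^n μ_s e^{−ikφ_s} for all integers k with |k| ≤ n−m−1; (d) there exist a monic polynomial p_{n−1}(z) = z^{n−1} + ⋯ having all its zeros in the open unit disk 𝔻 and an η ∈ 𝕋 such that z p_{n−1}(z) + η p*_{n−1}(z) = ∏_{s=1}^n (z − e^{iφ_s}) and the power series of (η p*_{n−1}(z) − z p_{n−1}(z))/(η p*_{n−1}(z) + z p_{n−1}(z))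 at z = 0 equals 1 + 2Σ_{k=1}^{n−m−1} c_k z^k + O(z^{n−m}). -/
/-!
Write `ζ s = exp (i φ s)` and `Q = ∏ s, (z - ζ s)`. The weights `w` of total mass one in (a)
correspond to the polynomials `p` in (d) through partial fractions:
`p = ∑ s, w s * Q / (z - ζ s)`, which is `mixPoly`. For such `p` one has `Q = z p + η p*` with
`η = ∏ s, (-ζ s)`, and
`(η p* - z p) / (η p* + z p) = 1 - 2 z p / Q = ∑ s, w s * (ζ s + z) / (ζ s - z)`,
whose Taylor coefficients at `0` are `1` and `2 ∑ s, w s * (ζ s)⁻ᵏ`. Comparing Taylor coefficients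
gives the moment conditions for `0 < k`; the case `k = 0` is the normalisation of `σ`, and negative
`k` follow by conjugation.

Positivity of the weights corresponds to the location of the zeros of `p`. If all `w s > 0`, then
for `1 ≤ ‖z‖` the real part of `z p / Q = ∑ s, w s * z / (z - ζ s)` is at least `1 / 2`, so `p` has
no zero there (`mixPoly_roots`). Conversely, if all zeros of `p` lie in the open disc, then at a
node `Q' / p = 1 + ∑ (1 - |a|²) / |ζ - a|²`, summed over the zeros `a` of `p`, by logarithmic
differentiation of the Blaschke product `p / p*` (`blaschke_rate`, `exists_weight`). Hence
`w s = p (ζ s) / Q' (ζ s)` is positive, and Lagrange interpolation recovers `p` from the weights.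
-/

open MeasureTheory Real Polynomial

/-! ### Reversal on the unit circle -/

/-- Polynomials that agree on the unit circle are equal. -/
lemma eq_of_eval_eq_on_circle (P Q : ℂ[X]) (h : ∀ z : ℂ, ‖z‖ = 1 → P.eval z = Q.eval z) :
    P = Q := by
  apply Polynomial.eq_of_infinite_eval_eq
  have hinj : Set.InjOn (fun x : ℝ => (Circle.exp x : ℂ)) (Set.Ico 0 1) := by
    intro x hx y hy hxy
    exact Circle.exp_injOn_Ico (a := 0) (b := 1) (by linarith [Real.pi_gt_three]) hx hy
      (Subtype.ext hxy)
  refine ((Set.Ico_infinite (zero_lt_one (α := ℝ))).image hinj).mono ?_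
  rintro _ ⟨x, -, rfl⟩
  exact h _ (Circle.norm_coe _)

lemma conj_eq_inv_of_norm_one {z : ℂ} (hz : ‖z‖ = 1) : starRingEnd ℂ z = z⁻¹ := by
  rw [Complex.inv_def, Complex.normSq_eq_norm_sq, hz]; simp

/-- On the unit circle, `P*(z) = z^N * conj (P z)`. -/
lemma eval_pstar_of_norm_one {N : ℕ} {P : ℂ[X]} (hP : P.natDegree ≤ N) {z : ℂ} (hz : ‖z‖ = 1) :
    (pstar N P).eval z = z ^ N * starRingEnd ℂ (P.eval z) := by
  have hz0 : z ≠ 0 := by rintro rfl; simp at hz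
  let _ : Invertible (z⁻¹) := invertibleOfNonzero (inv_ne_zero hz0)
  have h := eval₂_reflect_mul_pow (RingHom.id ℂ) z⁻¹ N (P.map (starRingEnd ℂ))
    (natDegree_map_le.trans hP)
  rw [invOf_eq_inv, inv_inv, ← Polynomial.eval, ← Polynomial.eval, ← conj_eq_inv_of_norm_one hz,
    eval_map_apply, conj_eq_inv_of_norm_one hz] at h
  rw [pstar, ← h, inv_pow]
  field_simp

/-! ### From weights to polynomials -/

/-- The monic polynomial vanishing at all nodes except `ζ s`. -/
noncomputable def nodeSub {n : ℕ} (ζ : Fin n → ℂ) (s : Fin n) : ℂ[X] :=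
  ∏ t ∈ Finset.univ.erase s, (X - C (ζ t))

/-- The combination `∑ s, w s * ∏_{t ≠ s} (X - ζ t)`. -/
noncomputable def mixPoly {n : ℕ} (ζ : Fin n → ℂ) (w : Fin n → ℝ) : ℂ[X] :=
  ∑ s, C (w s : ℂ) * nodeSub ζ s

section nodes
variable {n : ℕ} (ζ : Fin n → ℂ) (w : Fin n → ℝ)

lemma nodal_eq (s : Fin n) : ∏ t, (X - C (ζ t)) = (X - C (ζ s)) * nodeSub ζ s :=
  (Finset.mul_prod_erase _ _ (Finset.mem_univ s)).symm

lemma nodeSub_monic (s : Fin n) : (nodeSub ζ s).Monic :=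
  monic_prod_of_monic _ _ fun _ _ => monic_X_sub_C _

lemma nodeSub_natDegree (s : Fin n) : (nodeSub ζ s).natDegree = n - 1 := by
  rw [nodeSub, natDegree_prod_of_monic _ _ fun t _ => monic_X_sub_C _]
  simp

lemma nodeSub_eval_ne {z : ℂ} (s : Fin n) (h : ∀ t, t ≠ s → z ≠ ζ t) :
    (nodeSub ζ s).eval z ≠ 0 := by
  rw [nodeSub, eval_prod, Finset.prod_ne_zero_iff]
  intro t ht
  simpa [sub_eq_zero] using h t (Finset.ne_of_mem_erase ht)

lemma nodeSub_eval_node {s t : Fin n} (h : t ≠ s) : (nodeSub ζ s).eval (ζ t) = 0 := by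
  rw [nodeSub, eval_prod]
  exact Finset.prod_eq_zero (Finset.mem_erase.2 ⟨h, Finset.mem_univ t⟩) (by simp)

lemma mixPoly_natDegree_le : (mixPoly ζ w).natDegree ≤ n - 1 := by
  refine natDegree_sum_le_of_forall_le _ _ fun s _ => ?_
  exact (natDegree_C_mul_le _ _).trans (nodeSub_natDegree ζ s).le

lemma mixPoly_coeff : (mixPoly ζ w).coeff (n - 1) = ((∑ s, w s : ℝ) : ℂ) := by
  rw [mixPoly, finsetSum_coeff, Complex.ofReal_sum]
  refine Finset.sum_congr rfl fun s _ => ?_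
  have := nodeSub_monic ζ s
  rw [Monic, leadingCoeff, nodeSub_natDegree] at this
  rw [coeff_C_mul, this, mul_one]

lemma mixPoly_eval_node (s : Fin n) :
    (mixPoly ζ w).eval (ζ s) = w s * (nodeSub ζ s).eval (ζ s) := by
  rw [mixPoly, eval_finsetSum, Finset.sum_eq_single s]
  · simp
  · intro t _ ht
    simp [nodeSub_eval_node ζ ht.symm]
  · simp

/-- Away from the nodes, the combination divided by the nodal polynomial has the partial fraction
expansion `∑ s, w s / (z - ζ s)`. -/
lemma mixPoly_eval_of_ne {z : ℂ} (hz : ∀ s, z ≠ ζ s) :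
    (mixPoly ζ w).eval z = (∏ t, (X - C (ζ t))).eval z * ∑ s, (w s : ℂ) / (z - ζ s) := by
  rw [mixPoly, eval_finsetSum, Finset.mul_sum]
  refine Finset.sum_congr rfl fun s _ => ?_
  have : z - ζ s ≠ 0 := sub_ne_zero.2 (hz s)
  rw [nodal_eq ζ s]
  simp
  field_simp

/-- Conjugation on the circle maps the polynomial with the node `ζ s` removed to a multiple of
itself: each factor satisfies `-ζ * z * conj (z - ζ) = z - ζ`. -/
lemma nodeSub_conj (hζ : ∀ s, ‖ζ s‖ = 1) (s : Fin n) {z : ℂ} (hz : ‖z‖ = 1) :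
    (∏ t, -ζ t) * z ^ (n - 1) * starRingEnd ℂ ((nodeSub ζ s).eval z) =
      -ζ s * (nodeSub ζ s).eval z := by
  have hz0 : z ≠ 0 := by rintro rfl; simp at hz
  have hcard : (Finset.univ.erase s).card = n - 1 := by simp
  rw [← Finset.mul_prod_erase _ _ (Finset.mem_univ s), nodeSub, eval_prod, map_prod, ← hcard,
    ← Finset.prod_const, mul_assoc, mul_assoc, ← Finset.prod_mul_distrib,
    ← Finset.prod_mul_distrib]
  congr 1
  refine Finset.prod_congr rfl fun t _ => ?_
  have ht0 : ζ t ≠ 0 := by intro h; have := hζ t; simp [h] at this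
  simp only [eval_sub, eval_X, eval_C, map_sub, conj_eq_inv_of_norm_one hz,
    conj_eq_inv_of_norm_one (hζ t)]
  field_simp
  ring

/-- The decomposition of the nodal polynomial attached to weights of total mass one. -/
lemma mixPoly_nodal (hζ : ∀ s, ‖ζ s‖ = 1) (hw : ∑ s, w s = 1) :
    X * mixPoly ζ w + C (∏ t, -ζ t) * pstar (n - 1) (mixPoly ζ w) = ∏ s, (X - C (ζ s)) := by
  apply eq_of_eval_eq_on_circle
  intro z hz
  have hw' : ∑ s, (w s : ℂ) = 1 := by exact_mod_cast hw
  have h1 : (∏ s, (X - C (ζ s))).eval z =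
      ∑ s, (w s : ℂ) * ((z - ζ s) * (nodeSub ζ s).eval z) := by
    rw [← one_mul (eval z (∏ s, (X - C (ζ s)))), ← hw', Finset.sum_mul]
    refine Finset.sum_congr rfl fun s _ => ?_
    rw [nodal_eq ζ s]; simp
  rw [h1, eval_add, eval_mul, eval_mul, eval_C, eval_X,
    eval_pstar_of_norm_one (mixPoly_natDegree_le ζ w) hz, mixPoly, eval_finsetSum, map_sum,
    Finset.mul_sum, Finset.mul_sum, Finset.mul_sum, ← Finset.sum_add_distrib]
  refine Finset.sum_congr rfl fun s _ => ?_
  have := nodeSub_conj ζ hζ s hz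
  simp only [eval_mul, eval_C, map_mul, Complex.conj_ofReal]
  linear_combination (w s : ℂ) * this

lemma re_ge_half {u : ℂ} (hu : ‖u‖ ≤ 1) (h1 : u ≠ 1) : 1 / 2 ≤ ((1 - u)⁻¹).re := by
  have h0 : 0 < Complex.normSq (1 - u) := Complex.normSq_pos.2 (sub_ne_zero.2 h1.symm)
  have h2 : Complex.normSq u ≤ 1 := by
    rw [Complex.normSq_eq_norm_sq]; nlinarith [norm_nonneg u]
  rw [Complex.inv_re, div_le_div_iff₀ two_pos h0]
  simp [Complex.normSq_apply] at h2 ⊢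
  nlinarith

/-- Zeros of a positive combination lie in the open disc: at a point with `1 ≤ ‖z‖` which is not a
node, every `z / (z - ζ s)` has real part at least `1 / 2`. -/
lemma mixPoly_roots (hζ : ∀ s, ‖ζ s‖ = 1) (hinj : Function.Injective ζ) (hpos : ∀ s, 0 < w s)
    (hw : ∑ s, w s = 1) {z : ℂ} (hz : (mixPoly ζ w).eval z = 0) : ‖z‖ < 1 := by
  by_contra! hlt
  have hz0 : z ≠ 0 := by rintro rfl; simp at hlt; linarith
  by_cases hnode : ∃ s, z = ζ s
  · obtain ⟨s, rfl⟩ := hnode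
    rw [mixPoly_eval_node] at hz
    refine mul_ne_zero ?_ (nodeSub_eval_ne ζ s fun t ht h => ht (hinj h.symm)) hz
    exact_mod_cast (hpos s).ne'
  · push Not at hnode
    rw [mixPoly_eval_of_ne ζ w hnode] at hz
    have hQ : (∏ t, (X - C (ζ t))).eval z ≠ 0 := by
      rw [eval_prod, Finset.prod_ne_zero_iff]
      intro t _
      simpa [sub_eq_zero] using hnode t
    have hsum := (mul_eq_zero.1 hz).resolve_left hQ
    have h2 : ∑ s, (w s : ℂ) * (1 - ζ s / z)⁻¹ = 0 := by
      rw [← mul_zero z, ← hsum, Finset.mul_sum]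
      refine Finset.sum_congr rfl fun s _ => ?_
      have : z - ζ s ≠ 0 := sub_ne_zero.2 (hnode s)
      have h3 : 1 - ζ s / z = (z - ζ s) / z := by field_simp
      rw [h3, inv_div]
      field_simp
    have h3 := congrArg Complex.re h2
    rw [Complex.re_sum, Complex.zero_re] at h3
    have h4 : ∑ s, w s * (1 / 2) ≤ ∑ s, ((w s : ℂ) * (1 - ζ s / z)⁻¹).re := by
      refine Finset.sum_le_sum fun s _ => ?_
      rw [Complex.re_ofReal_mul]
      refine mul_le_mul_of_nonneg_left (re_ge_half ?_ ?_) (hpos s).le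
      · rw [norm_div, hζ s]
        exact (div_le_one (by linarith)).2 hlt
      · intro h
        exact hnode s ((div_eq_one_iff_eq hz0).1 h).symm
    rw [← Finset.sum_mul, hw, h3] at h4
    norm_num at h4

end nodes

/-! ### From polynomials to weights -/

/-- The winding rate of the Blaschke product `P / P*` on the unit circle is nonnegative; each zero
`a` contributes `(1 - |a|²) / |ζ - a|²`. -/
lemma blaschke_rate (S : Multiset ℂ) (hS : ∀ a ∈ S, ‖a‖ < 1) {ζ : ℂ} (hζ : ‖ζ‖ = 1) :
    ∃ r : ℝ, 0 ≤ r ∧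
      ζ * ((derivative (S.map fun a => X - C a).prod).eval ζ *
            ((S.map fun a => 1 - C (starRingEnd ℂ a) * X).prod).eval ζ -
          ((S.map fun a => X - C a).prod).eval ζ *
            (derivative (S.map fun a => 1 - C (starRingEnd ℂ a) * X).prod).eval ζ) =
        r * (((S.map fun a => X - C a).prod).eval ζ *
          ((S.map fun a => 1 - C (starRingEnd ℂ a) * X).prod).eval ζ) := by
  induction S using Multiset.induction_on with
  | empty => exact ⟨0, le_rfl, by simp⟩
  | cons a S ih =>
    obtain ⟨r, hr, h⟩ := ih fun b hb => hS b (Multiset.mem_cons_of_mem hb)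
    have ha : ‖a‖ < 1 := hS a (Multiset.mem_cons_self a S)
    have hne : ζ - a ≠ 0 := by
      intro h0
      rw [sub_eq_zero.1 h0] at hζ
      linarith
    have hζ0 : ζ ≠ 0 := by rintro rfl; simp at hζ
    have hpos : 0 < ‖ζ - a‖ ^ 2 := by positivity
    have ha2 : (0 : ℝ) ≤ 1 - ‖a‖ ^ 2 := by nlinarith [norm_nonneg a]
    refine ⟨r + (1 - ‖a‖ ^ 2) / ‖ζ - a‖ ^ 2, add_nonneg hr (div_nonneg ha2 hpos.le), ?_⟩
    simp only [Multiset.map_cons, Multiset.prod_cons, derivative_mul, derivative_sub,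
      derivative_X, derivative_C, derivative_one, eval_add, eval_mul, eval_sub, eval_X, eval_C,
      eval_one, sub_zero, zero_mul, zero_add, zero_sub, mul_one, one_mul,
      eval_neg]
    set P := ((S.map fun a => X - C a).prod).eval ζ
    set R := ((S.map fun a => 1 - C (starRingEnd ℂ a) * X).prod).eval ζ
    have hna : (‖a‖ ^ 2 : ℂ) = a * starRingEnd ℂ a := by
      rw [Complex.mul_conj']
    have hnz : (‖ζ - a‖ ^ 2 : ℂ) = (ζ - a) * (ζ⁻¹ - starRingEnd ℂ a) := by
      rw [← Complex.mul_conj', map_sub, conj_eq_inv_of_norm_one hζ]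
    have hfac : (ζ - a) * (1 - starRingEnd ℂ a * ζ) = ζ * (‖ζ - a‖ ^ 2 : ℂ) := by
      rw [hnz]; field_simp
    have hnorm0 : (‖ζ - a‖ ^ 2 : ℂ) ≠ 0 := by exact_mod_cast hpos.ne'
    have hextra : (((1 - ‖a‖ ^ 2) / ‖ζ - a‖ ^ 2 : ℝ) : ℂ) *
        ((ζ - a) * (1 - starRingEnd ℂ a * ζ)) = ζ * (1 - a * starRingEnd ℂ a) := by
      rw [hfac]
      push_cast
      rw [← hna, mul_left_comm, div_mul_cancel₀ _ hnorm0]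
    rw [Complex.ofReal_add]
    linear_combination (ζ - a) * (1 - starRingEnd ℂ a * ζ) * h - P * R * hextra

/-- The reversed polynomial of a monic product of linear factors. -/
lemma pstar_eq_prod (S : Multiset ℂ) :
    pstar (Multiset.card S) (S.map fun a => X - C a).prod =
      (S.map fun a => 1 - C (starRingEnd ℂ a) * X).prod := by
  apply eq_of_eval_eq_on_circle
  intro z hz
  have hz0 : z ≠ 0 := by rintro rfl; simp at hz
  rw [eval_pstar_of_norm_one (natDegree_multiset_prod_X_sub_C_eq_card S).le hz]
  induction S using Multiset.induction_on with
  | empty => simp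
  | cons a S ih =>
    simp only [Multiset.map_cons, Multiset.prod_cons, Multiset.card_cons, eval_mul, map_mul,
      eval_sub, eval_X, eval_C, eval_one, map_sub, conj_eq_inv_of_norm_one hz]
    rw [← ih, pow_succ]
    field_simp

section nodes
variable {n : ℕ} (ζ : Fin n → ℂ)

/-- The value of `p` at a node is a positive multiple of the derivative of the nodal polynomial:
`Q' / p = 1 + r` at a zero of `Q = z p + η p*`, where `r` is the rate from `blaschke_rate`. -/
lemma exists_weight {p : ℂ[X]} (hp : p.Monic) (hdeg : p.natDegree = n - 1)
    (hroots : ∀ z : ℂ, p.eval z = 0 → ‖z‖ < 1) {η : ℂ}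
    (hQ : X * p + C η * pstar (n - 1) p = ∏ s, (X - C (ζ s)))
    (hζ : ∀ s, ‖ζ s‖ = 1) (s : Fin n) :
    ∃ w : ℝ, 0 < w ∧ p.eval (ζ s) = w * (nodeSub ζ s).eval (ζ s) := by
  have hsplit := (IsAlgClosed.splits p).eq_prod_roots_of_monic hp
  have hcard : Multiset.card p.roots = n - 1 := by
    rw [← hdeg, (IsAlgClosed.splits p).natDegree_eq_card_roots]
  have hstar := pstar_eq_prod p.roots
  rw [hcard, ← hsplit] at hstar
  obtain ⟨r, hr, h⟩ := blaschke_rate p.roots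
    (fun a ha => hroots a (isRoot_of_mem_roots ha)) (hζ s)
  rw [← hsplit, ← hstar] at h
  have hp0 : p.eval (ζ s) ≠ 0 := fun h0 => by
    have := hroots _ h0
    rw [hζ s] at this
    exact lt_irrefl _ this
  have hζ0 : ζ s ≠ 0 := by intro h0; have := hζ s; simp [h0] at this
  have hb : (pstar (n - 1) p).eval (ζ s) ≠ 0 := by
    rw [eval_pstar_of_norm_one hdeg.le (hζ s)]
    exact mul_ne_zero (pow_ne_zero _ hζ0) ((_root_.map_ne_zero _).2 hp0)
  rw [nodal_eq ζ s] at hQ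
  have h1 := congrArg (eval (ζ s)) hQ
  have h2 := congrArg (fun q => eval (ζ s) (derivative q)) hQ
  simp only [derivative_add, derivative_mul, derivative_sub, derivative_X, derivative_C, eval_add,
    eval_mul, eval_sub, eval_X, eval_C, sub_self, sub_zero, zero_mul,
    one_mul, zero_add, add_zero] at h1 h2
  have h3 : (nodeSub ζ s).eval (ζ s) = (1 + r) * p.eval (ζ s) := by
    apply mul_right_cancel₀ hb
    linear_combination h - (pstar (n - 1) p).eval (ζ s) * h2 +
      (derivative (pstar (n - 1) p)).eval (ζ s) * h1
  have h4 : (1 + r : ℂ) ≠ 0 := by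
    have : (1 + r : ℝ) ≠ 0 := by positivity
    exact_mod_cast this
  refine ⟨(1 + r)⁻¹, by positivity, ?_⟩
  rw [h3]
  push_cast
  field_simp

/-- Lagrange interpolation turns the weights at the nodes into a representation of `p`. -/
lemma exists_weights (hn : 1 ≤ n) (hinj : Function.Injective ζ) {p : ℂ[X]} (hp : p.Monic)
    (hdeg : p.natDegree = n - 1)
    (hroots : ∀ z : ℂ, p.eval z = 0 → ‖z‖ < 1) {η : ℂ}
    (hQ : X * p + C η * pstar (n - 1) p = ∏ s, (X - C (ζ s)))
    (hζ : ∀ s, ‖ζ s‖ = 1) :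
    ∃ w : Fin n → ℝ, (∀ s, 0 < w s) ∧ ∑ s, w s = 1 ∧ p = mixPoly ζ w := by
  choose w hpos hw using exists_weight ζ hp hdeg hroots hQ hζ
  have hpw : p = mixPoly ζ w := by
    have hlt : ∀ q : ℂ[X], q.natDegree ≤ n - 1 → q.degree < (Finset.univ : Finset (Fin n)).card :=
      fun q hq => by
        rw [Finset.card_univ, Fintype.card_fin]
        refine degree_le_natDegree.trans_lt ?_
        exact_mod_cast (by omega : q.natDegree < n)
    refine Polynomial.eq_of_degrees_lt_of_eval_index_eq (v := ζ) Finset.univ hinj.injOn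
      (hlt _ hdeg.le) (hlt _ (mixPoly_natDegree_le ζ w)) fun s _ => ?_
    rw [hw, mixPoly_eval_node]
  refine ⟨w, hpos, ?_, hpw⟩
  have h := mixPoly_coeff ζ w
  rw [← hpw, ← hdeg, hp.coeff_natDegree] at h
  exact_mod_cast h.symm

end nodes

/-! ### Taylor coefficients -/

section nodes
variable {n : ℕ} (ζ : Fin n → ℂ)

/-- Taylor expansion with remainder of `(Q - 2 z p) / Q = ∑ s, w s * (ζ s + z) / (ζ s - z)`. -/
lemma taylor_bound (w : Fin n → ℝ) {η : ℂ}
    (hQ : X * mixPoly ζ w + C η * pstar (n - 1) (mixPoly ζ w) = ∏ s, (X - C (ζ s)))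
    (hζ : ∀ s, ‖ζ s‖ = 1) (N : ℕ) (hN : 1 ≤ N) {z : ℂ} (hz : ‖z‖ < 1 / 2) :
    ‖(η * (pstar (n - 1) (mixPoly ζ w)).eval z - z * (mixPoly ζ w).eval z) /
          (η * (pstar (n - 1) (mixPoly ζ w)).eval z + z * (mixPoly ζ w).eval z) -
        (1 + ∑ k ∈ Finset.Icc 1 (N - 1), 2 * (∑ s, (w s : ℂ) * ((ζ s)⁻¹) ^ k) * z ^ k)‖ ≤
      (∑ s, 4 * |w s|) * ‖z‖ ^ N := by
  have hne : ∀ s, z ≠ ζ s := by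
    rintro s rfl
    rw [hζ s] at hz
    norm_num at hz
  have hQ0 : (∏ t, (X - C (ζ t))).eval z ≠ 0 := by
    rw [eval_prod, Finset.prod_ne_zero_iff]
    intro t _
    simpa [sub_eq_zero] using hne t
  have hev := congrArg (eval z) hQ
  rw [eval_add, eval_mul, eval_mul, eval_C, eval_X] at hev
  have hmix := mixPoly_eval_of_ne ζ w hne
  have hfrac : (η * (pstar (n - 1) (mixPoly ζ w)).eval z - z * (mixPoly ζ w).eval z) /
      (η * (pstar (n - 1) (mixPoly ζ w)).eval z + z * (mixPoly ζ w).eval z) =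
      1 - 2 * z * ∑ s, (w s : ℂ) / (z - ζ s) := by
    rw [add_comm (η * _), hev, div_eq_iff hQ0]
    linear_combination hev - 2 * z * hmix
  have hrem : 1 - 2 * z * ∑ s, (w s : ℂ) / (z - ζ s) -
      (1 + ∑ k ∈ Finset.Icc 1 (N - 1), 2 * (∑ s, (w s : ℂ) * ((ζ s)⁻¹) ^ k) * z ^ k) =
      ∑ s, 2 * (w s : ℂ) * ((z * (ζ s)⁻¹) ^ N * (1 - z * (ζ s)⁻¹)⁻¹) := by
    have hswap : ∑ k ∈ Finset.Icc 1 (N - 1), 2 * (∑ s, (w s : ℂ) * ((ζ s)⁻¹) ^ k) * z ^ k =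
        ∑ s, 2 * (w s : ℂ) * ∑ k ∈ Finset.Icc 1 (N - 1), (z * (ζ s)⁻¹) ^ k := by
      simp_rw [Finset.mul_sum, Finset.sum_mul]
      rw [Finset.sum_comm]
      refine Finset.sum_congr rfl fun s _ => Finset.sum_congr rfl fun k _ => ?_
      rw [mul_pow]; ring
    have hcancel : ∀ A B : ℂ, 1 - A - (1 + B) = -A - B := fun A B => by ring
    rw [hswap, Finset.mul_sum, hcancel, ← Finset.sum_neg_distrib, ← Finset.sum_sub_distrib]
    refine Finset.sum_congr rfl fun s _ => ?_
    have hζ0 : ζ s ≠ 0 := by intro h0; have := hζ s; simp [h0] at this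
    have hd : z - ζ s ≠ 0 := sub_ne_zero.2 (hne s)
    have hu : 1 - z * (ζ s)⁻¹ ≠ 0 := by
      intro h0
      apply hd
      field_simp at h0
      linear_combination -h0
    have hgeom : 1 + ∑ k ∈ Finset.Icc 1 (N - 1), (z * (ζ s)⁻¹) ^ k =
        (1 - (z * (ζ s)⁻¹) ^ N) * (1 - z * (ζ s)⁻¹)⁻¹ := by
      rw [eq_mul_inv_iff_mul_eq₀ hu, ← geom_sum_mul_neg]
      congr 1
      obtain ⟨M, rfl⟩ : ∃ M, N = M + 1 := ⟨N - 1, by omega⟩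
      rw [Finset.range_eq_Ico, Finset.sum_eq_sum_Ico_succ_bot (Nat.succ_pos M), pow_zero]
      rfl
    have hlead : (w s : ℂ) / (z - ζ s) * z = (w s : ℂ) * (1 - (1 - z * (ζ s)⁻¹)⁻¹) := by
      have h1 : 1 - z * (ζ s)⁻¹ = -((z - ζ s) / ζ s) := by field_simp; ring
      rw [h1, inv_neg, inv_div]
      field_simp
      ring
    linear_combination -2 * hlead - 2 * (w s : ℂ) * hgeom
  rw [hfrac, hrem, Finset.sum_mul]
  refine norm_sum_le_of_le _ fun s _ => ?_
  have hu : ‖z * (ζ s)⁻¹‖ = ‖z‖ := by rw [norm_mul, norm_inv, hζ s]; simp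
  have hlow : 1 / 2 ≤ ‖1 - z * (ζ s)⁻¹‖ := by
    have := norm_sub_norm_le 1 (z * (ζ s)⁻¹)
    rw [hu, norm_one] at this
    linarith
  have hinv : ‖1 - z * (ζ s)⁻¹‖⁻¹ ≤ 2 := by
    rw [inv_le_comm₀ (by linarith) two_pos]; linarith
  rw [norm_mul, norm_mul, norm_mul, norm_pow, hu, norm_inv, Complex.norm_real, Complex.norm_ofNat,
    Real.norm_eq_abs]
  calc 2 * |w s| * (‖z‖ ^ N * ‖1 - z * (ζ s)⁻¹‖⁻¹) ≤ 2 * |w s| * (‖z‖ ^ N * 2) := by gcongr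
    _ = 4 * |w s| * ‖z‖ ^ N := by ring

end nodes

/-- A polynomial with `|P z| ≤ K |z|^N` near `0` has no coefficients below `N`. -/
lemma coeff_eq_zero_of_bound (N : ℕ) (P : ℂ[X]) {ε K : ℝ} (hε : 0 < ε)
    (h : ∀ z : ℂ, ‖z‖ < ε → ‖P.eval z‖ ≤ K * ‖z‖ ^ N) (k : ℕ) (hk : k < N) : P.coeff k = 0 := by
  induction N generalizing P k with
  | zero => omega
  | succ N ih =>
    have h0 : P.coeff 0 = 0 := by
      have := h 0 (by simpa using hε)
      rw [norm_zero, zero_pow (Nat.succ_ne_zero N), mul_zero, norm_le_zero_iff] at this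
      rwa [coeff_zero_eq_eval_zero]
    obtain ⟨R, rfl⟩ := X_dvd_iff.2 h0
    cases k with
    | zero => exact h0
    | succ k =>
      rw [coeff_X_mul]
      refine ih R ?_ k (by omega)
      -- The bound for `R = P / X` holds off `0` by division and extends to `0` by continuity.
      have hoff : ∀ z : ℂ, z ≠ 0 → ‖z‖ < ε → ‖R.eval z‖ ≤ K * ‖z‖ ^ N := by
        intro z hz hzε
        have hz' : 0 < ‖z‖ := norm_pos_iff.2 hz
        have := h z hzε
        rw [eval_mul, eval_X, norm_mul, pow_succ] at this
        refine le_of_mul_le_mul_left ?_ hz'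
        linarith
      intro z hzε
      rcases eq_or_ne z 0 with rfl | hz
      · have hcl : (0 : ℂ) ∈ closure ({0}ᶜ : Set ℂ) := by
          rw [closure_compl_singleton]; trivial
        have hne : (nhdsWithin (0 : ℂ) {0}ᶜ).NeBot := mem_closure_iff_nhdsWithin_neBot.1 hcl
        have hL : Filter.Tendsto (fun z : ℂ => ‖R.eval z‖) (nhdsWithin 0 {0}ᶜ)
            (nhds ‖R.eval 0‖) :=
          (R.continuous.norm.tendsto 0).mono_left nhdsWithin_le_nhds
        have hRt : Filter.Tendsto (fun z : ℂ => K * ‖z‖ ^ N) (nhdsWithin 0 {0}ᶜ)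
            (nhds (K * ‖(0 : ℂ)‖ ^ N)) :=
          ((by fun_prop : Continuous fun z : ℂ => K * ‖z‖ ^ N).tendsto 0).mono_left
            nhdsWithin_le_nhds
        refine le_of_tendsto_of_tendsto hL hRt ?_
        filter_upwards [self_mem_nhdsWithin, nhdsWithin_le_nhds (Metric.ball_mem_nhds 0 hε)]
          with y hy hyε
        exact hoff y hy (by simpa using hyε)
      · exact hoff z hz hzε

/-! ### The equivalence -/

theorem stmt6
    (σ : Measure ℝ) [IsFiniteMeasure σ]
    (hsupp : σ (Set.Icc 0 (2 * π))ᶜ = 0)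
    (hnorm : (1 / (2 * π)) * ∫ _φ, (1 : ℝ) ∂σ = 1)
    (n : ℕ) (hn : 1 ≤ n) (m : ℕ) (hm : m ≤ n - 1)
    (φs : Fin n → ℝ) (hmono : StrictMono φs)
    (hrange : ∀ s, φs s ∈ Set.Ico 0 (2 * π))
    -- the moments of `σ`
    (c : ℤ → ℂ)
    (hc : ∀ k : ℤ, c k =
      (1 / (2 * (π : ℂ))) * ∫ φ : ℝ, Complex.exp (-(k : ℂ) * Complex.I * (φ : ℂ)) ∂σ) :
    -- (a)
    (∃ μ : Fin n → ℝ, (∀ s, 0 < μ s) ∧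
        ∀ k : ℤ, |k| ≤ (n : ℤ) - m - 1 →
          c k = ∑ s, (μ s : ℂ) * Complex.exp (-(k : ℂ) * Complex.I * (φs s : ℂ))) ↔
    -- (d)
    (∃ p : Polynomial ℂ, p.Monic ∧ p.natDegree = n - 1 ∧
        (∀ z : ℂ, p.eval z = 0 → ‖z‖ < 1) ∧
        ∃ η : ℂ, ‖η‖ = 1 ∧
          (X * p + C η * pstar (n - 1) p =
            ∏ s, (X - C (Complex.exp (Complex.I * (φs s : ℂ))))) ∧
          -- `(η p* - z p)/(η p* + z p) = 1 + 2 ∑_{k=1}^{n-m-1} c_k z^k + O(z^{n-m})`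
          ∃ ε > (0 : ℝ), ∃ Cst : ℝ, ∀ z : ℂ, ‖z‖ < ε →
            ‖(η * (pstar (n - 1) p).eval z - z * p.eval z) /
                (η * (pstar (n - 1) p).eval z + z * p.eval z) -
              (1 + ∑ k ∈ Finset.Icc 1 (n - m - 1), 2 * c k * z ^ k)‖ ≤
              Cst * ‖z‖ ^ (n - m)) := by
  set ζ : Fin n → ℂ := fun s => Complex.exp (Complex.I * (φs s : ℂ)) with hζdef
  have hζ : ∀ s, ‖ζ s‖ = 1 := fun s => by
    simp only [hζdef, mul_comm Complex.I]
    exact Complex.norm_exp_ofReal_mul_I _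
  have hinj : Function.Injective ζ := by
    intro s t hst
    apply hmono.injective
    refine Circle.exp_injOn_Ico (a := 0) (b := 2 * π) (by linarith) (hrange s) (hrange t) ?_
    apply Subtype.ext
    simpa [hζdef, Circle.coe_exp, mul_comm] using hst
  have hpow : ∀ (k : ℕ) (s : Fin n),
      Complex.exp (-((k : ℤ) : ℂ) * Complex.I * (φs s : ℂ)) = ((ζ s)⁻¹) ^ k := by
    intro k s
    rw [hζdef, ← Complex.exp_neg, ← Complex.exp_nat_mul]
    congr 1
    push_cast
    ring
  have hc0 : c 0 = 1 := by
    have h1 : (1 / (2 * (π : ℂ))) * ((∫ _φ : ℝ, (1 : ℝ) ∂σ : ℝ) : ℂ) = 1 := by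
      exact_mod_cast hnorm
    rw [← integral_complex_ofReal] at h1
    rw [hc, ← h1]
    congr 2
    simp
  have hexpconj : ∀ (k : ℤ) (φ : ℝ), Complex.exp (-((-k : ℤ) : ℂ) * Complex.I * (φ : ℂ)) =
      starRingEnd ℂ (Complex.exp (-(k : ℂ) * Complex.I * (φ : ℂ))) := by
    intro k φ
    rw [← Complex.exp_conj]
    congr 1
    simp
  have hcconj : ∀ k : ℤ, c (-k) = starRingEnd ℂ (c k) := by
    intro k
    rw [hc, hc, map_mul, ← integral_conj]
    simp_rw [hexpconj]
    congr 1
    simp [Complex.conj_ofNat]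
  constructor
  · rintro ⟨w, hpos, hw⟩
    have hsum : ∑ s, w s = 1 := by
      have h := hw 0 (by simp; omega)
      rw [hc0] at h
      simp at h
      exact_mod_cast h.symm
    have hmonic : (mixPoly ζ w).coeff (n - 1) = 1 := by rw [mixPoly_coeff, hsum]; simp
    have hQ := mixPoly_nodal ζ w hζ hsum
    refine ⟨mixPoly ζ w, monic_of_natDegree_le_of_coeff_eq_one _ (mixPoly_natDegree_le ζ w) hmonic,
      natDegree_eq_of_le_of_coeff_ne_zero (mixPoly_natDegree_le ζ w) (by rw [hmonic]; simp),
      fun z hz => mixPoly_roots ζ w hζ hinj hpos hsum hz, ∏ t, -ζ t, ?_, hQ,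
      1 / 2, by norm_num, ∑ s, 4 * |w s|, fun z hz => ?_⟩
    · rw [norm_prod]
      simp [hζ]
    · have hb := taylor_bound ζ w hQ hζ (n - m) (by omega) hz
      have hcd : ∑ k ∈ Finset.Icc 1 (n - m - 1), 2 * c k * z ^ k =
          ∑ k ∈ Finset.Icc 1 (n - m - 1), 2 * (∑ s, (w s : ℂ) * ((ζ s)⁻¹) ^ k) * z ^ k := by
        refine Finset.sum_congr rfl fun k hk => ?_
        rw [Finset.mem_Icc] at hk
        rw [hw k (by rw [abs_of_nonneg (by positivity)]; omega)]
        simp_rw [hpow]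
      rw [hcd]
      exact hb
  · rintro ⟨p, hp, hdeg, hroots, η, -, hQ, ε, hε, K, hK⟩
    obtain ⟨w, hpos, hsum, rfl⟩ := exists_weights ζ hn hinj hp hdeg hroots hQ hζ
    refine ⟨w, hpos, ?_⟩
    -- Both Taylor sections approximate the same function, so their difference is `O(z^(n-m))`.
    set D : ℂ[X] := ∑ k ∈ Finset.Icc 1 (n - m - 1),
      C (2 * c k - 2 * ∑ s, (w s : ℂ) * ((ζ s)⁻¹) ^ k) * X ^ k with hD
    have hDb : ∀ z : ℂ, ‖z‖ < min ε (1 / 2) →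
        ‖D.eval z‖ ≤ ((∑ s, 4 * |w s|) + K) * ‖z‖ ^ (n - m) := by
      intro z hz
      have h1 := hK z (hz.trans_le (min_le_left _ _))
      have h2 := taylor_bound ζ w hQ hζ (n - m) (by omega) (hz.trans_le (min_le_right _ _))
      have h3 : D.eval z = (1 + ∑ k ∈ Finset.Icc 1 (n - m - 1), 2 * c k * z ^ k) -
          (1 + ∑ k ∈ Finset.Icc 1 (n - m - 1),
            2 * (∑ s, (w s : ℂ) * ((ζ s)⁻¹) ^ k) * z ^ k) := by
        rw [hD, eval_finsetSum, add_sub_add_left_eq_sub, ← Finset.sum_sub_distrib]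
        refine Finset.sum_congr rfl fun k _ => ?_
        simp only [eval_mul, eval_C, eval_pow, eval_X]
        ring
      rw [h3, add_mul]
      refine le_trans ?_ (add_le_add h2 h1)
      rw [norm_sub_rev _ (1 + ∑ k ∈ Finset.Icc 1 (n - m - 1), 2 * c k * z ^ k), add_comm ‖_‖]
      exact norm_sub_le_norm_sub_add_norm_sub _ _ _
    have hnat : ∀ k : ℕ, k ≤ n - m - 1 → c k = ∑ s, (w s : ℂ) * ((ζ s)⁻¹) ^ k := by
      intro k hk
      rcases Nat.eq_zero_or_pos k with rfl | hk0
      · have hsum' : ∑ s, (w s : ℂ) = 1 := by exact_mod_cast hsum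
        simp [hc0, hsum']
      · have h := coeff_eq_zero_of_bound (n - m) D (lt_min hε (by norm_num)) hDb k (by omega)
        rw [hD, finsetSum_coeff, Finset.sum_eq_single k] at h
        · rw [coeff_C_mul, coeff_X_pow_self, mul_one] at h
          linear_combination h / 2
        · intro j _ hj
          rw [coeff_C_mul, coeff_X_pow, if_neg hj.symm, mul_zero]
        · intro hk'
          exact absurd (Finset.mem_Icc.2 ⟨hk0, hk⟩) hk'
    have hnat' : ∀ k : ℕ, k ≤ n - m - 1 → c k =
        ∑ s, (w s : ℂ) * Complex.exp (-((k : ℤ) : ℂ) * Complex.I * (φs s : ℂ)) := by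
      intro k hk
      simp_rw [hpow]
      exact hnat k hk
    intro k hk
    obtain ⟨j, rfl | rfl⟩ := k.eq_nat_or_neg
    · exact hnat' j (by rw [abs_of_nonneg (by positivity)] at hk; omega)
    · have hj : j ≤ n - m - 1 := by
        rw [abs_neg, abs_of_nonneg (by positivity)] at hk; omega
      simp_rw [hexpconj]
      rw [hcconj, hnat' j hj, map_sum]
      simp
end

section
/- Let n, m ∈ ℕ with m ≤ n−1, let Φ_{n−m−1} and Ψ_{n−m−1} be the orthogonal and second kind polynomials associated with Verblunsky coefficients a₀,…,a_{n−m−2} (|a_j| < 1), let q_m be a monic polynomial of degree m with all zeros in the open unit disk 𝔻, and let η ∈ 𝕋. Define p_{n−1} by 2 z p_{n−1}(z) = z q_m(z)·(Φ_{n−m−1}(z) + Ψ_{n−m−1}(z)) + η q_m*(z)·(Φ*_{n−m−1}(z) − Ψ*_{n−m−1}(z)). Then p_{n−1} is a monic polynomial of degree n−1 and p*_{n−1} has no zero in the closed unit disk; equivalently, p_{n−1} has all its zeros in 𝔻. -/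
/-!
Write `k = n - m - 1`, `A = (Φ_k + Ψ_k) / 2` and `D = (Φ*_k - Ψ*_k) / 2`, so that
`z p = z q A + η q* D`. The recurrences of `Φ`, `Φ*`, `Ψ`, `Ψ*` combine to
`A_{j+1} = z A_j - a_j D_j` and `D_{j+1} = D_j - conj(a_j) z A_j`, so on evaluation
`|A_{j+1}|² - |D_{j+1}|² = (1 - |a_j|²) (|z A_j|² - |D_j|²)`. By induction, `|D| < |z A|` whenever
`|z| ≥ 1` (`norm_diff_lt`). As the zeros of `q` lie in the disk, also `|q*| ≤ |q| ≠ 0` there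
(`norm_pstar_le`), so `z q A` strictly dominates `η q* D` and `p` has no zero with `|z| ≥ 1`.
The degree claims follow since `z q A` is monic of degree `n` while `q* D` has degree at most
`n - 1`; the claim on `p*` follows from the zeros of `p` by the reflection `z ↦ 1 / conj z`.
-/

open Polynomial

lemma pstar_coeff_zero (n : ℕ) (P : ℂ[X]) :
    (pstar n P).coeff 0 = starRingEnd ℂ (P.coeff n) := by
  simp [pstar, coeff_reflect]

lemma pstar_natDegree_le {n : ℕ} {P : ℂ[X]} (h : P.natDegree ≤ n) :
    (pstar n P).natDegree ≤ n := by
  refine (natDegree_reflect_le).trans ?_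
  simpa using h

lemma pstar_mul {F G : ℕ} {P Q : ℂ[X]} (hP : P.natDegree ≤ F) (hQ : Q.natDegree ≤ G) :
    pstar (F + G) (P * Q) = pstar F P * pstar G Q := by
  unfold pstar
  rw [Polynomial.map_mul]
  exact reflect_mul _ _ (by simpa using hP) (by simpa using hQ)

lemma pstar_pstar (n : ℕ) (P : ℂ[X]) : pstar n (pstar n P) = P := by
  ext i
  simp [pstar, coeff_reflect]

lemma pstar_X : pstar 1 X = 1 := by
  simp [pstar]

lemma pstar_one_C (c : ℂ) : pstar 1 (C c) = C (starRingEnd ℂ c) * X := by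
  simp [pstar]

lemma pstar_add (n : ℕ) (P Q : ℂ[X]) : pstar n (P + Q) = pstar n P + pstar n Q := by
  simp [pstar, Polynomial.map_add, reflect_add]

/-- The recurrence for the reversed polynomials in a Szegő recursion. -/
lemma pstar_step {j : ℕ} {P : ℂ[X]} (h : P.natDegree ≤ j) (b : ℂ) :
    pstar (j + 1) (X * P + C b * pstar j P) =
      pstar j P + C (starRingEnd ℂ b) * X * P := by
  rw [pstar_add, add_comm j 1, pstar_mul natDegree_X_le h,
    pstar_mul (by simp) (pstar_natDegree_le h), pstar_pstar, pstar_X, pstar_one_C, one_mul]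

/-- The polynomials of a Szegő recursion are monic with the expected degree. -/
lemma szego_degree {k : ℕ} {b : ℕ → ℂ} {F : ℕ → ℂ[X]} (h0 : F 0 = 1)
    (hrec : ∀ j < k, F (j + 1) = X * F j + C (b j) * pstar j (F j)) :
    ∀ j ≤ k, (F j).natDegree ≤ j ∧ (F j).coeff j = 1 := by
  intro j
  induction j with
  | zero => intro _; simp [h0]
  | succ j ih =>
    intro hj
    obtain ⟨hd, hc⟩ := ih (by omega)
    have hs := pstar_natDegree_le hd
    rw [hrec j (by omega)]
    constructor
    · refine (natDegree_add_le _ _).trans (max_le ?_ ?_)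
      · refine natDegree_mul_le.trans ?_
        have := natDegree_X_le (R := ℂ)
        omega
      · exact (natDegree_C_mul_le _ _).trans (by omega)
    · rw [coeff_add, coeff_X_mul, hc, coeff_C_mul, coeff_eq_zero_of_natDegree_lt (by omega)]
      simp

lemma normSq_sub_step (x y a : ℂ) :
    Complex.normSq (x - a * y) - Complex.normSq (y - starRingEnd ℂ a * x) =
      (1 - Complex.normSq a) * (Complex.normSq x - Complex.normSq y) := by
  simp only [Complex.normSq_apply, Complex.sub_re, Complex.sub_im, Complex.mul_re,
    Complex.mul_im, Complex.conj_re, Complex.conj_im]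
  ring

lemma norm_lt_step {x y a : ℂ} (ha : ‖a‖ < 1) (h : ‖y‖ < ‖x‖) :
    ‖y - starRingEnd ℂ a * x‖ < ‖x - a * y‖ := by
  have h1 := normSq_sub_step x y a
  simp only [Complex.normSq_eq_norm_sq] at h1
  have h2 : 0 < (1 - ‖a‖ ^ 2) * (‖x‖ ^ 2 - ‖y‖ ^ 2) := by
    apply mul_pos <;> nlinarith [norm_nonneg a, norm_nonneg x, norm_nonneg y]
  exact lt_of_pow_lt_pow_left₀ 2 (norm_nonneg _) (by linarith)

/-- For `|z| ≥ 1` the sum `Φ + Ψ`, multiplied by `z`, strictly dominates `Φ* - Ψ*`. -/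
lemma norm_diff_lt {k : ℕ} {a : ℕ → ℂ} (ha : ∀ j < k, ‖a j‖ < 1) {Φ Ψ : ℕ → ℂ[X]}
    (hΦ0 : Φ 0 = 1) (hΨ0 : Ψ 0 = 1)
    (hΦ : ∀ j < k, Φ (j + 1) = X * Φ j + C (-a j) * pstar j (Φ j))
    (hΨ : ∀ j < k, Ψ (j + 1) = X * Ψ j + C (a j) * pstar j (Ψ j))
    {z : ℂ} (hz : 1 ≤ ‖z‖) :
    ∀ j ≤ k, ‖(pstar j (Φ j) - pstar j (Ψ j)).eval z‖ < ‖z * (Φ j + Ψ j).eval z‖ := by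
  intro j
  induction j with
  | zero =>
    intro _
    have : z ≠ 0 := by rintro rfl; norm_num at hz
    rw [hΦ0, hΨ0]
    norm_num
    exact this
  | succ j ih =>
    intro hj
    have hlt := norm_lt_step (ha j (by omega)) (ih (by omega))
    have dΦ := (szego_degree hΦ0 hΦ j (by omega)).1
    have dΨ := (szego_degree hΨ0 hΨ j (by omega)).1
    rw [hΦ j (by omega), hΨ j (by omega), pstar_step dΦ, pstar_step dΨ]
    refine lt_of_lt_of_le (b := ‖z * (Φ j + Ψ j).eval z -
      a j * (pstar j (Φ j) - pstar j (Ψ j)).eval z‖) ?_ ?_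
    · refine lt_of_eq_of_lt (congrArg norm ?_) hlt
      simp only [eval_add, eval_sub, eval_mul, eval_X, eval_C, eval_neg, map_neg]
      ring
    · rw [norm_mul]
      refine le_trans (le_of_eq ?_) (le_mul_of_one_le_left (norm_nonneg _) hz)
      congr 1
      simp only [eval_add, eval_sub, eval_mul, eval_X, eval_C]
      ring

lemma norm_pstar_prod_le {z : ℂ} (hz : 1 ≤ ‖z‖) (s : Multiset ℂ) (hs : ∀ w ∈ s, ‖w‖ < 1) :
    ‖(pstar (Multiset.card s) (s.map fun w => X - C w).prod).eval z‖ ≤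
      ‖((s.map fun w => X - C w).prod).eval z‖ := by
  induction s using Multiset.induction with
  | empty => simp [pstar]
  | cons w s ih =>
    have ih' := ih fun v hv => hs v (Multiset.mem_cons_of_mem hv)
    have hw := hs w (Multiset.mem_cons_self w s)
    have h1 : pstar 1 (X - C w) = 1 - C (starRingEnd ℂ w) * X := by
      rw [sub_eq_add_neg, ← C_neg, pstar_add, pstar_X, pstar_one_C]
      simp [sub_eq_add_neg]
    rw [Multiset.card_cons, add_comm, Multiset.map_cons, Multiset.prod_cons,
      pstar_mul (by simp) (by rw [natDegree_multiset_prod_X_sub_C_eq_card]), h1,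
      eval_mul, eval_mul, norm_mul, norm_mul]
    refine mul_le_mul ?_ ih' (norm_nonneg _) (norm_nonneg _)
    have h2 := normSq_sub_step z 1 w
    simp only [Complex.normSq_eq_norm_sq] at h2
    have h3 : 0 ≤ (1 - ‖w‖ ^ 2) * (‖z‖ ^ 2 - ‖(1 : ℂ)‖ ^ 2) := by
      rw [norm_one]
      apply mul_nonneg <;> nlinarith [norm_nonneg w]
    simp only [eval_sub, eval_one, eval_mul, eval_C, eval_X]
    rw [mul_one] at h2
    exact le_of_sq_le_sq (by linarith) (norm_nonneg _)

/-- For a monic `q` with zeros in the disk, `|q*| ≤ |q|` outside it: each zero `w` contributes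
`|1 - conj(w) z| ≤ |z - w|`. -/
lemma norm_pstar_le {q : ℂ[X]} (hq : q.Monic) (hz : ∀ z : ℂ, q.eval z = 0 → ‖z‖ < 1)
    {z : ℂ} (h : 1 ≤ ‖z‖) : ‖(pstar q.natDegree q).eval z‖ ≤ ‖q.eval z‖ := by
  have hs : q.Splits := IsAlgClosed.splits q
  have hprod := hs.eq_prod_roots_of_monic hq
  have := norm_pstar_prod_le h q.roots fun w hw => hz w (isRoot_of_mem_roots hw)
  rwa [← hprod, ← hs.natDegree_eq_card_roots] at this

/-- The zeros of `P*` are the reflections of those of `P` in the unit circle. -/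
lemma pstar_root {n : ℕ} {P : ℂ[X]} (hP : P.natDegree ≤ n) {z : ℂ} (hz : z ≠ 0)
    (h : (pstar n P).eval z = 0) : P.eval (starRingEnd ℂ z)⁻¹ = 0 := by
  let : Invertible z⁻¹ := invertibleOfNonzero (inv_ne_zero hz)
  have h1 := (eval₂_reflect_eq_zero_iff (RingHom.id ℂ) z⁻¹ n (P.map (starRingEnd ℂ))
    (by simpa using hP)).1 (by rw [invOf_eq_inv, inv_inv]; exact h)
  have h2 : z⁻¹ = starRingEnd ℂ (starRingEnd ℂ z)⁻¹ := by simp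
  rw [← eval, h2, eval_map_apply] at h1
  simpa using h1

theorem stmt9
    (n m : ℕ) (hn : 1 ≤ n) (hm : 1 ≤ m) (hmn : m ≤ n - 1)
    (a : ℕ → ℂ) (ha : ∀ j < n - m - 1, ‖a j‖ < 1)
    (Φ : ℕ → Polynomial ℂ) (hΦ0 : Φ 0 = 1)
    (hΦrec : ∀ j < n - m - 1, Φ (j + 1) = X * Φ j - C (a j) * pstar j (Φ j))
    (Ψ : ℕ → Polynomial ℂ) (hΨ0 : Ψ 0 = 1)
    (hΨrec : ∀ j < n - m - 1, Ψ (j + 1) = X * Ψ j + C (a j) * pstar j (Ψ j))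
    (q : Polynomial ℂ) (hqmonic : q.Monic) (hqdeg : q.natDegree = m)
    (hqzeros : ∀ z : ℂ, q.eval z = 0 → ‖z‖ < 1)
    (η : ℂ) (hη : ‖η‖ = 1)
    (p : Polynomial ℂ)
    (hp : 2 * (X * p) =
      X * q * (Φ (n - m - 1) + Ψ (n - m - 1)) +
        C η * pstar m q *
          (pstar (n - m - 1) (Φ (n - m - 1)) - pstar (n - m - 1) (Ψ (n - m - 1)))) :
    p.Monic ∧ p.natDegree = n - 1 ∧
      (∀ z : ℂ, ‖z‖ ≤ 1 → (pstar (n - 1) p).eval z ≠ 0) ∧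
      (∀ z : ℂ, p.eval z = 0 → ‖z‖ < 1) := by
  have hΦrec' : ∀ j < n - m - 1, Φ (j + 1) = X * Φ j + C (-a j) * pstar j (Φ j) := by
    intro j hj
    rw [hΦrec j hj, C_neg]
    ring
  have hlt := fun (z : ℂ) (hz : 1 ≤ ‖z‖) =>
    norm_diff_lt ha hΦ0 hΨ0 hΦrec' hΨrec hz (n - m - 1) le_rfl
  obtain ⟨dΦ, cΦ⟩ := szego_degree hΦ0 hΦrec' (n - m - 1) le_rfl
  obtain ⟨dΨ, cΨ⟩ := szego_degree hΨ0 hΨrec (n - m - 1) le_rfl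
  have hn1 : n - 1 = m + (n - m - 1) := by omega
  rw [hn1]
  -- From here on only degrees, leading coefficients and the estimate `hlt` matter.
  generalize n - m - 1 = k at *
  generalize Φ k = F at *
  generalize Ψ k = G at *
  have dq : q.natDegree ≤ m := hqdeg.le
  have cq : q.coeff m = 1 := by rw [← hqdeg]; exact hqmonic
  have dS : (F + G).natDegree ≤ k := (natDegree_add_le _ _).trans (max_le dΦ dΨ)
  have dD : (pstar k F - pstar k G).natDegree ≤ k :=
    (natDegree_sub_le _ _).trans (max_le (pstar_natDegree_le dΦ) (pstar_natDegree_le dΨ))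
  have d1 : (q * (F + G)).natDegree ≤ m + k := natDegree_mul_le_of_le dq dS
  have d2 : (C η * pstar m q * (pstar k F - pstar k G)).natDegree ≤ m + k :=
    natDegree_mul_le_of_le ((natDegree_C_mul_le _ _).trans (pstar_natDegree_le dq)) dD
  have hcoeff : ∀ i, 2 * p.coeff i = (q * (F + G)).coeff i +
      (C η * pstar m q * (pstar k F - pstar k G)).coeff (i + 1) := by
    intro i
    have h := congrArg (fun P => coeff P (i + 1)) hp
    have h2 : (2 : ℂ[X]) = C 2 := rfl
    simpa only [h2, coeff_C_mul, coeff_add, mul_assoc X, coeff_X_mul] using h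
  have hdeg : p.natDegree ≤ m + k := by
    rw [natDegree_le_iff_coeff_eq_zero]
    intro i hi
    have h := hcoeff i
    rw [coeff_eq_zero_of_natDegree_lt (d1.trans_lt hi),
      coeff_eq_zero_of_natDegree_lt (d2.trans_lt (by omega))] at h
    simpa using h
  have hlead : p.coeff (m + k) = 1 := by
    have h := hcoeff (m + k)
    rw [coeff_mul_add_eq_of_natDegree_le dq dS, cq, coeff_add, cΦ, cΨ,
      coeff_eq_zero_of_natDegree_lt (d2.trans_lt (by omega))] at h
    linear_combination h / 2
  have hzeros : ∀ z : ℂ, p.eval z = 0 → ‖z‖ < 1 := by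
    intro z hpz
    by_contra! hz
    have hq0 : 0 < ‖q.eval z‖ := by
      rw [norm_pos_iff]
      exact fun h => (hqzeros z h).not_ge hz
    have hqs : ‖(pstar m q).eval z‖ ≤ ‖q.eval z‖ := by
      rw [← hqdeg]
      exact norm_pstar_le hqmonic hqzeros hz
    have h := congrArg (eval z) hp
    simp only [eval_mul, eval_add, eval_X, eval_C, hpz, mul_zero] at h
    have heq : q.eval z * (z * (F + G).eval z) =
        -(η * (pstar m q).eval z * (pstar k F - pstar k G).eval z) := by
      rw [eval_add]
      linear_combination -h
    have hnorm := congrArg norm heq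
    rw [norm_neg, norm_mul (q.eval z), norm_mul (η * _), norm_mul η, hη, one_mul] at hnorm
    have h1 := mul_lt_mul_of_pos_left (hlt z hz) hq0
    have h2 := mul_le_mul_of_nonneg_right hqs (norm_nonneg ((pstar k F - pstar k G).eval z))
    linarith
  refine ⟨monic_of_natDegree_le_of_coeff_eq_one _ hdeg hlead,
    natDegree_eq_of_le_of_coeff_ne_zero hdeg (by rw [hlead]; exact one_ne_zero), ?_, hzeros⟩
  intro z hz h0
  -- At `z = 0` the value of `p*` is the conjugate leading coefficient; elsewhere reflect.
  by_cases hz0 : z = 0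
  · rw [hz0, ← coeff_zero_eq_eval_zero, pstar_coeff_zero, hlead] at h0
    simp at h0
  · have h1 := hzeros _ (pstar_root hdeg hz0 h0)
    rw [norm_inv, RCLike.norm_conj] at h1
    exact h1.not_ge ((one_le_inv₀ (norm_pos_iff.2 hz0)).2 hz)
end

section
/- Let l, m ∈ ℕ₀ with m ≤ l ≤ n−1 and κ ∈ 𝕋. Suppose T_n(z) = ∏_{s=1}^n (z − e^{iφ_s}), 0 ≤ φ₁ < ⋯ < φ_n < 2π, is the nodes polynomial of a positive (n−1−m, n, dσ) quadrature formula, and write T_n = z q_l Φ_{n−1−l} + η q_l* Φ*_{n−1−l} with q_l monic of degree l having all zeros in the open unit disk and η ∈ 𝕋 (such a representation exists by the characterization theorem). Then every common zero of T_n and of the para-orthogonal polynomial z Φ_{n−1−l} + κ Φ*_{n−1−l} is a zero of κ q_l(z) − η q_l*(z). -/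
/-!
Put `N = n - 1 - l`. At a common zero `z`, eliminating `z Φ_N(z) = -κ Φ_N*(z)` from `T_n(z) = 0`
gives `Φ_N*(z) (κ q(z) - η q*(z)) = 0`, so it is enough to know `Φ_N*(z) ≠ 0`. As a zero of `T_n`,
`z` lies on the unit circle, where `|Φ_N*(z)| = |Φ_N(z)|`; hence `Φ_N(z) ≠ 0` has to be shown.

Since `N ≤ n - 1 - m`, the quadrature formula transfers the orthogonality of `Φ_N` to the discrete
measure `∑ μ_s δ_{w_s}`, `w_s = e^{iφ_s}` (`discrete_orth`). If `Φ_N = (X - z) p` with `|z| = 1`,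
then, `Φ_N` being orthogonal to `p`, Pythagoras gives
`‖p‖² = ‖X p‖² = ‖Φ_N + z p‖² = ‖Φ_N‖² + ‖p‖²` in the discrete `L²` space. So `Φ_N` vanishes at all
`n > N` nodes, which is impossible for a monic polynomial of degree `N`
(`eval_ne_zero_of_discrete_orth`).
-/

open MeasureTheory Real Polynomial

theorem pstar_eval_of_norm_one {N : ℕ} {P : ℂ[X]} (hP : P.natDegree ≤ N) {z : ℂ}
    (hz : ‖z‖ = 1) :
    (pstar N P).eval z * (starRingEnd ℂ z) ^ N = starRingEnd ℂ (P.eval z) := by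
  have hzz : z * starRingEnd ℂ z = 1 := by
    rw [Complex.mul_conj, Complex.normSq_eq_norm_sq, hz]; simp
  let inv : Invertible (starRingEnd ℂ z) := ⟨z, hzz, by rw [mul_comm]; exact hzz⟩
  have h := eval₂_reflect_mul_pow (RingHom.id ℂ) (starRingEnd ℂ z) N (P.map (starRingEnd ℂ))
    (natDegree_map_le.trans hP)
  have h2 : ⅟(starRingEnd ℂ z) = z := rfl
  rw [h2] at h
  simpa [pstar, eval₂_id, eval_map, Polynomial.eval₂_at_apply] using h

theorem exp_mul_eval_eq_sum (P : ℂ[X]) (j : ℕ) (φ : ℝ) :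
    Complex.exp (-(j : ℂ) * Complex.I * (φ : ℂ)) * P.eval (Complex.exp (Complex.I * (φ : ℂ))) =
      ∑ i ∈ Finset.range (P.natDegree + 1),
        P.coeff i * Complex.exp (-(((j : ℤ) - (i : ℤ) : ℤ) : ℂ) * Complex.I * (φ : ℂ)) := by
  rw [eval_eq_sum_range, Finset.mul_sum]
  refine Finset.sum_congr rfl fun i _ => ?_
  rw [← Complex.exp_nat_mul, mul_left_comm, ← Complex.exp_add]
  congr 2
  push_cast
  ring

/-- A quadrature formula exact for frequencies up to `M ≥ deg P` preserves the relation of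
orthogonality of `P` to `z ^ j`, for `j < deg P`. -/
theorem discrete_orth (σ : Measure ℝ) [IsFiniteMeasure σ] {n : ℕ} (φs : Fin n → ℝ)
    (μw : Fin n → ℝ) (M : ℤ)
    (hquad : ∀ k : ℤ, |k| ≤ M →
      (1 / (2 * (π : ℂ))) * ∫ φ : ℝ, Complex.exp (-(k : ℂ) * Complex.I * (φ : ℂ)) ∂σ =
        ∑ s, (μw s : ℂ) * Complex.exp (-(k : ℂ) * Complex.I * (φs s : ℂ)))
    (P : ℂ[X]) (hM : (P.natDegree : ℤ) ≤ M) (j : ℕ) (hj : j < P.natDegree)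
    (horth : ∫ φ : ℝ, Complex.exp (-(j : ℂ) * Complex.I * (φ : ℂ)) *
        P.eval (Complex.exp (Complex.I * (φ : ℂ))) ∂σ = 0) :
    ∑ s, (μw s : ℂ) * (Complex.exp (-(j : ℂ) * Complex.I * (φs s : ℂ)) *
        P.eval (Complex.exp (Complex.I * (φs s : ℂ)))) = 0 := by
  have hint : ∀ k : ℤ,
      Integrable (fun φ : ℝ => Complex.exp (-(k : ℂ) * Complex.I * (φ : ℂ))) σ := by
    intro k
    refine Integrable.of_bound (C := 1) (Continuous.aestronglyMeasurable (by fun_prop)) ?_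
    refine Filter.Eventually.of_forall fun φ => ?_
    rw [Complex.norm_exp]
    simp
  simp_rw [exp_mul_eval_eq_sum] at horth ⊢
  rw [integral_finsetSum _ fun i _ => (hint _).const_mul _] at horth
  simp_rw [integral_const_mul] at horth
  simp_rw [Finset.mul_sum]
  rw [Finset.sum_comm]
  calc _ = ∑ i ∈ Finset.range (P.natDegree + 1), (1 / (2 * (π : ℂ))) * (P.coeff i *
        ∫ φ : ℝ, Complex.exp (-(((j : ℤ) - (i : ℤ) : ℤ) : ℂ) * Complex.I * (φ : ℂ)) ∂σ) := by
        refine Finset.sum_congr rfl fun i hi => ?_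
        have hi' := Finset.mem_range.mp hi
        rw [mul_left_comm, hquad _ (abs_le.mpr ⟨by omega, by omega⟩), Finset.mul_sum]
        exact Finset.sum_congr rfl fun s _ => by ring
    _ = 0 := by rw [← Finset.mul_sum, horth, mul_zero]

theorem conj_exp_pow (j : ℕ) (φ : ℝ) :
    starRingEnd ℂ (Complex.exp (Complex.I * (φ : ℂ)) ^ j) =
      Complex.exp (-(j : ℂ) * Complex.I * (φ : ℂ)) := by
  rw [← Complex.exp_nat_mul, ← Complex.exp_conj]
  congr 1
  simp
  ring

/-- A monic polynomial that is orthogonal to all lower powers, with respect to a positive discrete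
measure on the unit circle with more nodes than its degree, has no zero on the unit circle. -/
theorem eval_ne_zero_of_discrete_orth {n : ℕ} (w : Fin n → ℂ) (hw : ∀ s, ‖w s‖ = 1)
    (hinj : Function.Injective w) (μw : Fin n → ℝ) (hμpos : ∀ s, 0 < μw s)
    (P : ℂ[X]) (hP : P ≠ 0) (hdeg : P.natDegree < n)
    (horth : ∀ j < P.natDegree,
      ∑ s, (μw s : ℂ) * (starRingEnd ℂ (w s ^ j) * P.eval (w s)) = 0)
    {z : ℂ} (hz : ‖z‖ = 1) : P.eval z ≠ 0 := by
  intro h0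
  obtain ⟨p, hp⟩ := dvd_iff_isRoot.mpr h0
  have hp0 : p ≠ 0 := by rintro rfl; simp at hp; exact hP hp
  have hpd : P.natDegree = p.natDegree + 1 := by
    rw [hp, natDegree_mul (X_sub_C_ne_zero z) hp0, natDegree_X_sub_C, add_comm]
  have horthp : ∑ s, (μw s : ℂ) * (starRingEnd ℂ (p.eval (w s)) * P.eval (w s)) = 0 := by
    have : ∀ s, (μw s : ℂ) * (starRingEnd ℂ (p.eval (w s)) * P.eval (w s)) =
        ∑ j ∈ Finset.range (p.natDegree + 1), starRingEnd ℂ (p.coeff j) *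
          ((μw s : ℂ) * (starRingEnd ℂ (w s ^ j) * P.eval (w s))) := by
      intro s
      rw [eval_eq_sum_range, map_sum, Finset.sum_mul, Finset.mul_sum]
      refine Finset.sum_congr rfl fun j _ => ?_
      rw [map_mul]
      ring
    simp_rw [this]
    rw [Finset.sum_comm]
    refine Finset.sum_eq_zero fun j hj => ?_
    rw [← Finset.mul_sum, horth j (by rw [hpd]; exact Finset.mem_range.mp hj), mul_zero]
  -- Pointwise Pythagoras: `|w p|² = |P + z p|²` with `|w| = |z| = 1`.
  have hpt : ∀ s, Complex.normSq (P.eval (w s)) =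
      -2 * (starRingEnd ℂ z * (starRingEnd ℂ (p.eval (w s)) * P.eval (w s))).re := by
    intro s
    have h1 : w s * p.eval (w s) = P.eval (w s) + z * p.eval (w s) := by
      rw [hp]; simp; ring
    have h2 := congrArg Complex.normSq h1
    rw [Complex.normSq_add, Complex.normSq_mul, Complex.normSq_mul,
      Complex.normSq_eq_norm_sq (w s), Complex.normSq_eq_norm_sq z, hw, hz, map_mul] at h2
    have h3 : P.eval (w s) * (starRingEnd ℂ z * starRingEnd ℂ (p.eval (w s))) =
      starRingEnd ℂ z * (starRingEnd ℂ (p.eval (w s)) * P.eval (w s)) := by ring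
    rw [h3] at h2
    linarith
  have hsum : ∑ s, μw s * Complex.normSq (P.eval (w s)) = 0 := by
    have h4 := congrArg (fun x => -2 * (starRingEnd ℂ z * x).re) horthp
    simp only [mul_zero, Complex.zero_re] at h4
    rw [← h4, Finset.mul_sum, Complex.re_sum, Finset.mul_sum]
    refine Finset.sum_congr rfl fun s _ => ?_
    rw [hpt, mul_left_comm (starRingEnd ℂ z) (μw s : ℂ), Complex.re_ofReal_mul]
    ring
  have hzero : ∀ s, P.eval (w s) = 0 := by
    intro s
    have h5 := (Finset.sum_eq_zero_iff_of_nonneg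
      fun s _ => mul_nonneg (hμpos s).le (Complex.normSq_nonneg _)).mp hsum s (Finset.mem_univ s)
    exact Complex.normSq_eq_zero.mp ((mul_eq_zero.mp h5).resolve_left (hμpos s).ne')
  exact hP (eq_zero_of_natDegree_lt_card_of_eval_eq_zero P hinj hzero (by simpa using hdeg))

theorem exp_I_mul_injOn {a b : ℝ} (ha : a ∈ Set.Ico 0 (2 * π)) (hb : b ∈ Set.Ico 0 (2 * π))
    (h : Complex.exp (Complex.I * (a : ℂ)) = Complex.exp (Complex.I * (b : ℂ))) : a = b := by
  rw [mul_comm, mul_comm Complex.I] at h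
  have h' : Circle.exp a = Circle.exp b := by
    ext; simpa [Circle.coe_exp] using h
  obtain ⟨k, hk⟩ := Circle.exp_eq_exp.mp h'
  have hpi := Real.pi_pos
  have h1 : (k : ℝ) < 1 := by
    by_contra! hc
    nlinarith [ha.2, hb.1]
  have h2 : (-1 : ℝ) < k := by
    by_contra! hc
    nlinarith [ha.1, hb.2]
  have hk0 : k = 0 := by
    have : k < 1 := by exact_mod_cast h1
    have : -1 < k := by exact_mod_cast h2
    omega
  simpa [hk0] using hk

theorem stmt12
    (σ : Measure ℝ) [IsFiniteMeasure σ]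
    (hsupp : σ (Set.Icc 0 (2 * π))ᶜ = 0)
    (hnorm : (1 / (2 * π)) * ∫ _φ, (1 : ℝ) ∂σ = 1)
    -- the orthogonal polynomials `Φ`
    (Φ : ℕ → Polynomial ℂ) (hΦ0 : Φ 0 = 1)
    (hΦmonic : ∀ k, (Φ k).Monic) (hΦdeg : ∀ k, (Φ k).natDegree = k)
    (hΦorth : ∀ k : ℕ, ∀ j < k,
      ∫ φ : ℝ, Complex.exp (-(j : ℂ) * Complex.I * (φ : ℂ)) *
        (Φ k).eval (Complex.exp (Complex.I * (φ : ℂ))) ∂σ = 0)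
    (n : ℕ) (hn : 1 ≤ n) (l m : ℕ) (hml : m ≤ l) (hl : l ≤ n - 1)
    (κ : ℂ) (hκ : ‖κ‖ = 1)
    -- the nodes of a positive `(n-1-m, n, dσ)` quadrature formula
    (φs : Fin n → ℝ) (hmono : StrictMono φs)
    (hrange : ∀ s, φs s ∈ Set.Ico 0 (2 * π))
    (μw : Fin n → ℝ) (hμpos : ∀ s, 0 < μw s)
    (hquad : ∀ k : ℤ, |k| ≤ (n : ℤ) - 1 - m →
      (1 / (2 * (π : ℂ))) * ∫ φ : ℝ, Complex.exp (-(k : ℂ) * Complex.I * (φ : ℂ)) ∂σ =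
        ∑ s, (μw s : ℂ) * Complex.exp (-(k : ℂ) * Complex.I * (φs s : ℂ)))
    -- the nodes polynomial and its representation
    (Tn : Polynomial ℂ)
    (hTn : Tn = ∏ s, (X - C (Complex.exp (Complex.I * (φs s : ℂ)))))
    (q : Polynomial ℂ) (hqmonic : q.Monic) (hqdeg : q.natDegree = l)
    (hqzeros : ∀ z : ℂ, q.eval z = 0 → ‖z‖ < 1)
    (η : ℂ) (hη : ‖η‖ = 1)
    (hrep : Tn = X * q * Φ (n - 1 - l) +
      C η * pstar l q * pstar (n - 1 - l) (Φ (n - 1 - l))) :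
    -- every common zero of `Tn` and the para-orthogonal polynomial is a zero
    -- of `κ q_l - η q_l*`
    ∀ z : ℂ, Tn.eval z = 0 →
      (X * Φ (n - 1 - l) + C κ * pstar (n - 1 - l) (Φ (n - 1 - l))).eval z = 0 →
      κ * q.eval z - η * (pstar l q).eval z = 0 := by
  intro z hTz hpara
  set N := n - 1 - l with hN
  have hw : ∀ s, ‖Complex.exp (Complex.I * (φs s : ℂ))‖ = 1 := fun s => by
    rw [Complex.norm_exp]; simp
  have hz : ‖z‖ = 1 := by
    have h := hTz
    rw [hTn, eval_prod, Finset.prod_eq_zero_iff] at h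
    obtain ⟨s, -, hs⟩ := h
    rw [eval_sub, eval_X, eval_C, sub_eq_zero] at hs
    rw [hs, hw]
  have hΦz : (Φ N).eval z ≠ 0 := by
    refine eval_ne_zero_of_discrete_orth (fun s => Complex.exp (Complex.I * (φs s : ℂ))) hw
      (fun a b hab => hmono.injective (exp_I_mul_injOn (hrange a) (hrange b) hab)) μw hμpos
      (Φ N) (hΦmonic N).ne_zero (by rw [hΦdeg]; omega) (fun j hj => ?_) hz
    simp_rw [conj_exp_pow]
    exact discrete_orth σ φs μw _ hquad (Φ N) (by rw [hΦdeg]; omega) j hj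
      (hΦorth N j (by rwa [hΦdeg] at hj))
  have hstar : (pstar N (Φ N)).eval z ≠ 0 := by
    intro h
    have h1 := pstar_eval_of_norm_one (hΦdeg N).le hz
    rw [h, zero_mul] at h1
    exact hΦz ((map_eq_zero _).mp h1.symm)
  rw [hrep] at hTz
  simp only [eval_add, eval_mul, eval_X, eval_C] at hTz hpara
  refine (mul_eq_zero.mp ?_).resolve_left hstar
  linear_combination q.eval z * hpara - hTz
end
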